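/- arXiv:2209.01581 — 5 statements merged into one kernel-verified Lean document; each statement's English description precedes it below -/
import Mathlib

section
/- Let k be an algebraically closed field of characteristic zero, B a finitely generated k-algebra that is an integral domain, K the algebraic closure of Frac(B), and f ∈ B[x] a monic polynomial. Let R be a finitely generated B[x]_f-algebra containing B[x]_f that is flat as a B[x]_f-module and such that R ⊗_{B[x]_f} K(x) is an integral domain (the tensor product formed along the inclusion B[x]_f ⊆ K(x)). Then there exists a nonzero a ∈ B such that for every k-algebra homomorphism c : B → k with c(a) ≠ 0, the ring R ⊗_{B[x]_f} k(x) is an integral domain, where the tensor product is formed along the extension of c to B[x]_f → k(x) determined by c(x) = x. -/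
open scoped TensorProduct

section Helpers
open MvPolynomial


theorem aux_flat {B K : Type*} [CommRing B] [IsDomain B] [Field K] [Algebra B K]
    (hBK : Function.Injective (algebraMap B K)) : Module.Flat B K := by
  have : FaithfulSMul B K := (faithfulSMul_iff_algebraMap_injective B K).mpr hBK
  let : Algebra (FractionRing B) K := FractionRing.liftAlgebra B K
  have : IsScalarTower B (FractionRing B) K := inferInstance
  have : Module.Flat B (FractionRing B) := IsLocalization.flat _ (nonZeroDivisors B)
  exact Module.Flat.trans B (FractionRing B) K

theorem aux_point {B K D : Type*} [CommRing B] [IsDomain B] [Field K] [IsAlgClosed K] [Algebra B K]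
    [CommRing D] [Algebra B D] [Algebra.FiniteType B D] (hBK : Function.Injective (algebraMap B K))
    (h : IsEmpty (D →ₐ[B] K)) : ∃ a : B, a ≠ 0 ∧ algebraMap B D a = 0 := by
  by_contra! H
  have inj : Function.Injective (algebraMap B D) := by
    rw [injective_iff_map_eq_zero]
    intro a ha
    by_contra h0
    exact H a h0 ha
  have : Module.Flat B K := aux_flat hBK
  have : Nontrivial (K ⊗[B] D) := by
    have := Algebra.TensorProduct.includeLeft_injective (R := B) (S := B) (A := K) (B := D) inj
    exact this.nontrivial
  obtain ⟨M, hM⟩ := Ideal.exists_maximal (K ⊗[B] D)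
  let : Field ((K ⊗[B] D) ⧸ M) := Ideal.Quotient.field M
  have : Algebra.FiniteType K ((K ⊗[B] D) ⧸ M) := inferInstance
  have : Module.Finite K ((K ⊗[B] D) ⧸ M) := finite_of_finite_type_of_isJacobsonRing K _
  have : Algebra.IsIntegral K ((K ⊗[B] D) ⧸ M) := inferInstance
  let e : ((K ⊗[B] D) ⧸ M) →ₐ[K] K := IsAlgClosed.lift
  exact h.elim (((e.comp (Ideal.Quotient.mkₐ K M)).restrictScalars B).comp
    Algebra.TensorProduct.includeRight)
theorem aux_bertini {B K κ σ : Type*} [Finite σ] [CommRing B] [IsDomain B] [Field K]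
    [IsAlgClosed K] [Algebra B K] [Field κ]
    (hBK : Function.Injective (algebraMap B K))
    (g : MvPolynomial σ B) (hg : Irreducible (MvPolynomial.map (algebraMap B K) g)) :
    ∃ a : B, a ≠ 0 ∧ ∀ c : B →+* κ, c a ≠ 0 → Irreducible (MvPolynomial.map c g) := by
  classical
  set D := g.totalDegree with hD
  have hDK : (MvPolynomial.map (algebraMap B K) g).totalDegree = D :=
    by simp only [MvPolynomial.totalDegree, support_map_of_injective _ hBK, D]
  have hg0 : g ≠ 0 := by rintro rfl; simp at hg
  -- monomials of degree less than D
  let T := {m : σ →₀ ℕ // (m.sum fun _ e => e) < D}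
  have hT : Finite T := by
    have := (Finsupp.finite_of_degree_lt (σ := σ) D).to_subtype
    refine Finite.of_injective (β := {f : σ →₀ ℕ | Finsupp.degree f < D})
      (fun m => ⟨m.1, by have := m.2; simpa [Finsupp.degree_apply, Finsupp.sum] using this⟩) ?_
    intro m m' h
    ext1
    simpa using h
  have := Fintype.ofFinite T
  let E := MvPolynomial (T ⊕ T) B
  let p : MvPolynomial σ E := ∑ m : T, monomial m.1 (X (Sum.inl m))
  let q : MvPolynomial σ E := ∑ m : T, monomial m.1 (X (Sum.inr m))
  let J : Ideal E := Ideal.span (Set.range fun m => coeff m (p * q - MvPolynomial.map (C : B →+* E) g))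
  -- homs out of E
  have key : ∀ (c : B →+* κ) (P Q : MvPolynomial σ κ),
      P.totalDegree < D → Q.totalDegree < D → P * Q = MvPolynomial.map c g →
      ∀ b : B, algebraMap B (E ⧸ J) b = 0 → c b = 0 := by
    intro c P Q hP hQ hPQ b hb
    let ψ : E →+* κ := eval₂Hom c (Sum.elim (fun m : T => coeff m.1 P) (fun m : T => coeff m.1 Q))
    have hsum : ∀ P : MvPolynomial σ κ, P.totalDegree < D →
        ∑ m : T, monomial m.1 (coeff m.1 P) = P := by
      intro P hP
      ext m
      simp only [coeff_sum, coeff_monomial]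
      by_cases hm : (m.sum fun _ e => e) < D
      · rw [Finset.sum_eq_single (⟨m, hm⟩ : T)]
        · simp
        · intro b _ hb
          rw [if_neg]
          intro h
          exact hb (Subtype.ext h)
        · simp
      · rw [Finset.sum_eq_zero]
        · by_contra h
          exact hm (lt_of_le_of_lt (le_totalDegree (mem_support_iff.mpr (Ne.symm h))) hP)
        · intro x _
          rw [if_neg]
          rintro rfl
          exact hm x.2
    have hp : MvPolynomial.map ψ p = P := by
      simp only [p, map_sum, map_monomial]
      refine Eq.trans (Finset.sum_congr rfl fun m _ => ?_) (hsum P hP)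
      exact congrArg (monomial m.1) (eval₂Hom_X' c _ (Sum.inl m))
    have hq : MvPolynomial.map ψ q = Q := by
      simp only [q, map_sum, map_monomial]
      refine Eq.trans (Finset.sum_congr rfl fun m _ => ?_) (hsum Q hQ)
      exact congrArg (monomial m.1) (eval₂Hom_X' c _ (Sum.inr m))
    have hψ : ψ.comp C = c := by
      ext b
      exact eval₂Hom_C c _ b
    have hJ : ∀ x ∈ J, ψ x = 0 := by
      intro x hx
      have : J ≤ RingHom.ker ψ := by
        rw [Ideal.span_le]
        rintro _ ⟨m, rfl⟩
        change ψ _ = 0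
        rw [← coeff_map, map_sub, map_mul, hp, hq, MvPolynomial.map_map, hψ, hPQ, sub_self,
          coeff_zero]
      exact this hx
    have hb' : (C b : E) ∈ J := by
      rw [← Ideal.Quotient.eq_zero_iff_mem]
      exact hb
    have := hJ _ hb'
    rwa [← RingHom.comp_apply, hψ] at this
  have hD0 : 0 < D := by
    by_contra h0
    have h0 : D = 0 := by omega
    rw [h0, totalDegree_eq_zero_iff_eq_C] at hDK
    have hne := hg.ne_zero
    apply hg.not_isUnit
    rw [hDK] at hne ⊢
    exact (IsUnit.mk0 _ (by rintro h; rw [h] at hne; simp at hne)).map C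
  have hemp : IsEmpty ((E ⧸ J) →ₐ[B] K) := by
    refine ⟨fun φ => ?_⟩
    let ψ : E →+* K := (φ : (E ⧸ J) →+* K).comp (Ideal.Quotient.mk J)
    have hψ : ψ.comp C = algebraMap B K := by
      ext b
      exact φ.commutes b
    have hpq : MvPolynomial.map ψ p * MvPolynomial.map ψ q = MvPolynomial.map (algebraMap B K) g := by
      rw [← hψ, ← MvPolynomial.map_map (C : B →+* E) ψ g, ← map_mul, ← sub_eq_zero, ← map_sub]
      ext m
      rw [coeff_map, coeff_zero]
      change φ (Ideal.Quotient.mk J _) = 0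
      rw [Ideal.Quotient.eq_zero_iff_mem.mpr (Ideal.subset_span (Set.mem_range_self m)), map_zero]
    have hdeg : ∀ u : T → K, 0 < D → (∑ m : T, monomial m.1 (u m)).totalDegree < D := by
      intro u hD0
      refine lt_of_le_of_lt (totalDegree_finsetSum _ _) ?_
      rw [Finset.sup_lt_iff (by simpa using hD0)]
      intro m _
      exact lt_of_le_of_lt (totalDegree_monomial_le _ _) m.2
    have hp : (MvPolynomial.map ψ p).totalDegree < D := by
      simp only [p, map_sum, map_monomial]
      exact hdeg _ hD0
    have hq : (MvPolynomial.map ψ q).totalDegree < D := by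
      simp only [q, map_sum, map_monomial]
      exact hdeg _ hD0
    have hP0 : MvPolynomial.map ψ p ≠ 0 := by
      intro h; rw [h, zero_mul] at hpq; exact hg.ne_zero hpq.symm
    have hQ0 : MvPolynomial.map ψ q ≠ 0 := by
      intro h; rw [h, mul_zero] at hpq; exact hg.ne_zero hpq.symm
    have hs := totalDegree_mul_of_isDomain hP0 hQ0
    rw [hpq, hDK] at hs
    rcases hg.isUnit_or_isUnit hpq.symm with h | h
    · have := (MvPolynomial.isUnit_iff_totalDegree_of_isReduced.mp h).2
      omega
    · have := (MvPolynomial.isUnit_iff_totalDegree_of_isReduced.mp h).2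
      omega
  obtain ⟨a, ha, ha'⟩ := aux_point (K := K) hBK hemp
  obtain ⟨m0, hm0, hm0'⟩ : ∃ m ∈ g.support, (m.sum fun _ e => e) = D := by
    obtain ⟨m, hm, h⟩ := Finset.exists_mem_eq_sup g.support (support_nonempty.mpr hg0)
      (fun m => m.sum fun _ e => e)
    exact ⟨m, hm, h.symm⟩
  refine ⟨a * coeff m0 g, mul_ne_zero ha (mem_support_iff.mp hm0), fun c hc => ?_⟩
  rw [map_mul] at hc
  have hdeg : (MvPolynomial.map c g).totalDegree = D := by
    apply le_antisymm (Finset.sup_mono (support_map_subset _ _))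
    refine le_of_eq_of_le hm0'.symm (le_totalDegree ?_)
    rw [mem_support_iff, coeff_map]
    exact right_ne_zero_of_mul hc
  have hne : MvPolynomial.map c g ≠ 0 := by
    intro h
    rw [h, totalDegree_zero] at hdeg
    omega
  have hunit : ∀ P : MvPolynomial σ κ, P ≠ 0 → P.totalDegree = 0 → IsUnit P := by
    intro P hP h
    rw [totalDegree_eq_zero_iff_eq_C] at h
    rw [h] at hP ⊢
    exact (IsUnit.mk0 _ (by rintro h; rw [h] at hP; simp at hP)).map C
  refine ⟨fun hu => ?_, fun P Q hPQ => ?_⟩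
  · have := (MvPolynomial.isUnit_iff_totalDegree_of_isReduced.mp hu).2
    omega
  · by_contra! hcon
    have hP0 : P ≠ 0 := by
      rintro rfl; rw [zero_mul] at hPQ; exact hne hPQ
    have hQ0 : Q ≠ 0 := by
      rintro rfl; rw [mul_zero] at hPQ; exact hne hPQ
    have hs := totalDegree_mul_of_isDomain hP0 hQ0
    rw [← hPQ, hdeg] at hs
    have h1 : P.totalDegree ≠ 0 := fun h => hcon.1 (hunit P hP0 h)
    have h2 : Q.totalDegree ≠ 0 := fun h => hcon.2 (hunit Q hQ0 h)
    exact left_ne_zero_of_mul hc (key c P Q (by omega) (by omega) hPQ.symm a ha')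


theorem aux_genfree {B A : Type*} [CommRing B] [IsDomain B] [CommRing A] [Algebra B A]
    [Algebra.FiniteType B A] :
    ∃ a : B, a ≠ 0 ∧ Module.Free (Localization.Away a) (Localization.Away a ⊗[B] A) := by
  classical
  obtain ⟨n, π, hπ⟩ := Algebra.FiniteType.iff_quotient_mvPolynomial''.mp ‹Algebra.FiniteType B A›
  let m : MonomialOrder (Fin n) := MonomialOrder.lex
  let Δ : (Fin n →₀ ℕ) → Prop := fun d => ∃ p : MvPolynomial (Fin n) B, π p = 0 ∧ p ≠ 0 ∧ m.degree p = d
  have hfin : {d | Minimal Δ d}.Finite :=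
    WellQuasiOrderedLE.finite_of_isAntichain (setOfPred_minimal_antichain Δ)
  have hch : ∀ d : {d | Minimal Δ d}, ∃ p : MvPolynomial (Fin n) B, π p = 0 ∧ p ≠ 0 ∧ m.degree p = d.1 :=
    fun d => d.2.1
  choose G hG0 hGne hGd using hch
  have := hfin.fintype
  let a : B := ∏ d, m.leadingCoeff (G d)
  have ha : a ≠ 0 := Finset.prod_ne_zero_iff.mpr fun d _ => m.leadingCoeff_ne_zero_iff.mpr (hGne d)
  refine ⟨a, ha, ?_⟩
  let B' := Localization.Away a
  have hinj : Function.Injective (algebraMap B B') :=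
    IsLocalization.injective B' (powers_le_nonZeroDivisors_of_noZeroDivisors ha)
  let ψ : MvPolynomial (Fin n) B' →ₐ[B'] B' ⊗[B] A := aeval fun i => 1 ⊗ₜ π (X i)
  have hψ : ∀ p : MvPolynomial (Fin n) B, ψ (MvPolynomial.map (algebraMap B B') p) = 1 ⊗ₜ π p := by
    intro p
    have : ((ψ.restrictScalars B).comp (MvPolynomial.mapAlgHom (Algebra.ofId B B'))) =
      (Algebra.TensorProduct.includeRight : A →ₐ[B] B' ⊗[B] A).comp π := by
      ext i
      simp [ψ]
    exact congrArg (fun f => f p) this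
  have hψs : Function.Surjective ψ := by
    intro z
    induction z with
    | zero => exact ⟨0, map_zero _⟩
    | add x y hx hy =>
      obtain ⟨p, rfl⟩ := hx
      obtain ⟨q, rfl⟩ := hy
      exact ⟨p + q, map_add _ _ _⟩
    | tmul b x =>
      obtain ⟨p, rfl⟩ := hπ x
      refine ⟨b • MvPolynomial.map (algebraMap B B') p, ?_⟩
      rw [map_smul, hψ, TensorProduct.smul_tmul', smul_eq_mul, mul_one]
  let G' : {d | Minimal Δ d} → MvPolynomial (Fin n) B' := fun d => MvPolynomial.map (algebraMap B B') (G d)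
  have hsup : ∀ d, (G' d).support = (G d).support := fun d => support_map_of_injective _ hinj
  have hdeg : ∀ d, m.degree (G' d) = d.1 := by
    intro d
    rw [← hGd d]
    simp only [MonomialOrder.degree, hsup]
  have hlc : ∀ d, IsUnit (m.leadingCoeff (G' d)) := by
    intro d
    have : m.leadingCoeff (G' d) = algebraMap B B' (m.leadingCoeff (G d)) := by
      simp only [MonomialOrder.leadingCoeff, hdeg, hGd, G', coeff_map]
    rw [this]
    have hu : IsUnit (algebraMap B B' a) := IsLocalization.Away.algebraMap_isUnit a
    exact isUnit_of_dvd_unit (map_dvd _ (Finset.dvd_prod_of_mem (fun d => m.leadingCoeff (G d)) (Finset.mem_univ d))) hu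
  let St : Set (Fin n →₀ ℕ) := {s | ∀ d : {d | Minimal Δ d}, ¬ d.1 ≤ s}
  let N := restrictSupport B' St
  have hN : Module.Free B' N := Module.Free.of_basis (basisRestrictSupport B' St)
  let χ : N →ₗ[B'] B' ⊗[B] A := ψ.toLinearMap ∘ₗ N.subtype
  refine Module.Free.of_equiv (LinearEquiv.ofBijective χ ⟨?_, ?_⟩)
  · rw [injective_iff_map_eq_zero]
    rintro ⟨r, hr⟩ hr0
    change ψ r = 0 at hr0
    rw [mem_restrictSupport_iff] at hr
    let _ : Algebra (MvPolynomial (Fin n) B) (MvPolynomial (Fin n) B') := MvPolynomial.algebraMvPolynomial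
    have := MvPolynomial.isLocalization (σ := Fin n) (Submonoid.powers a) B'
    obtain ⟨⟨p, ⟨_, ⟨b, hb, rfl⟩⟩⟩, hp⟩ :=
      IsLocalization.surj (R := MvPolynomial (Fin n) B)
        (Submonoid.map (C : B →+* MvPolynomial (Fin n) B) (Submonoid.powers a)) r
    simp only [MvPolynomial.algebraMap_def, MvPolynomial.map_C] at hp
    -- some multiple of p is in the kernel
    have h1 : (TensorProduct.mk B B' A 1) (π p) = 0 := by
      change (1 : B') ⊗ₜ[B] π p = 0
      rw [← hψ, ← hp, map_mul, hr0, zero_mul]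
    rw [IsLocalizedModule.eq_zero_iff (Submonoid.powers a)] at h1
    obtain ⟨⟨e, he⟩, h1⟩ := h1
    change e • π p = 0 at h1
    have he0 : e ≠ 0 := powers_le_nonZeroDivisors_of_noZeroDivisors ha he |> nonZeroDivisors.ne_zero
    rw [← map_smul] at h1
    by_contra hr00
    have hr00 : r ≠ 0 := fun h => hr00 (by simp [h])
    have hb0 : b ≠ 0 := powers_le_nonZeroDivisors_of_noZeroDivisors ha hb |> nonZeroDivisors.ne_zero
    have hp0 : p ≠ 0 := by
      rintro rfl
      rw [map_zero] at hp
      rcases mul_eq_zero.mp hp with h | h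
      · exact hr00 h
      · rw [C_eq_zero] at h
        exact hb0 (hinj (by rw [h, map_zero]))
    have hep : e • p ≠ 0 := smul_ne_zero he0 hp0
    obtain ⟨d, hdle, hd⟩ := exists_minimal_le_of_wellFoundedLT Δ (m.degree (e • p)) ⟨_, h1, hep, rfl⟩
    have hmem : m.degree (e • p) ∈ r.support := by
      have h2 := m.degree_mem_support hep
      rw [mem_support_iff, coeff_smul] at h2
      have h3 : coeff (m.degree (e • p)) p ≠ 0 := fun h => h2 (by rw [h, smul_zero])
      rw [mem_support_iff]
      intro h4
      have h5 := congrArg (coeff (m.degree (e • p))) hp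
      rw [mul_comm, coeff_C_mul, h4, mul_zero, coeff_map] at h5
      exact h3 (hinj (by rw [← h5, map_zero]))
    exact hr hmem ⟨d, hd⟩ hdle
  · intro z
    obtain ⟨p, rfl⟩ := hψs z
    obtain ⟨q, r, hpr, -, hr⟩ := m.div hlc p
    refine ⟨⟨r, ?_⟩, ?_⟩
    · rw [mem_restrictSupport_iff]
      intro s hs d
      rw [← hdeg d]
      exact hr s hs d
    · change ψ r = ψ p
      rw [hpr, map_add, Finsupp.linearCombination_apply, Finsupp.sum, map_sum, Finset.sum_eq_zero, zero_add]
      intro d _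
      rw [smul_eq_mul, map_mul]
      simp [G', hψ, hG0]


theorem aux_reg {B A κ : Type*} [CommRing B] [IsDomain B] [CommRing A] [Algebra B A]
    [Algebra.FiniteType B A] [Field κ] (h : A) (hh : ∀ x, h * x = 0 → x = 0) :
    ∃ a : B, a ≠ 0 ∧ ∀ (_ : Algebra B κ), algebraMap B κ a ≠ 0 →
      ∀ z : κ ⊗[B] A, (1 ⊗ₜ h) * z = 0 → z = 0 := by
  obtain ⟨a, ha, hfree⟩ := aux_genfree (B := B) (A := A ⧸ Ideal.span {h})
  refine ⟨a, ha, fun _ hc z hz => ?_⟩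
  let B' := Localization.Away a
  let cl : B' →+* κ := IsLocalization.Away.lift a (IsUnit.mk0 _ hc)
  let _ : Algebra B' κ := cl.toAlgebra
  have : IsScalarTower B B' κ := IsScalarTower.of_algebraMap_eq fun b =>
    (IsLocalization.Away.lift_eq a (IsUnit.mk0 _ hc) b).symm
  have : Module.Flat B B' := IsLocalization.flat _ (Submonoid.powers a)
  let μ : A →ₗ[B] A := LinearMap.mulLeft B h
  let q : A →ₗ[B] (A ⧸ Ideal.span {h}) := (Ideal.Quotient.mkₐ B (Ideal.span {h})).toLinearMap
  have hμ : Function.Injective μ := by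
    rw [injective_iff_map_eq_zero]
    exact hh
  have hq : Function.Surjective q := Ideal.Quotient.mk_surjective
  have hex : Function.Exact μ q := by
    intro x
    change Ideal.Quotient.mk _ x = 0 ↔ _
    rw [Ideal.Quotient.eq_zero_iff_mem, Ideal.mem_span_singleton]
    constructor
    · rintro ⟨y, rfl⟩
      exact ⟨y, rfl⟩
    · rintro ⟨y, rfl⟩
      exact ⟨y, rfl⟩
  have hμ' : Function.Injective (μ.baseChange B') := Module.Flat.lTensor_preserves_injective_linearMap μ hμ
  have hq' : Function.Surjective (q.baseChange B') := LinearMap.lTensor_surjective B' hq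
  have hex' : Function.Exact (μ.baseChange B') (q.baseChange B') := lTensor_exact B' hex hq
  obtain ⟨s, hs⟩ := Module.projective_lifting_property (q.baseChange B') LinearMap.id hq'
  have tf := Function.Exact.split_tfae' hex'
  have hsp : ∃ ρ, ρ ∘ₗ (μ.baseChange B') = LinearMap.id :=
    ((tf.out 0 1 :
      (Function.Injective (μ.baseChange B') ∧ ∃ l, (q.baseChange B') ∘ₗ l = LinearMap.id) ↔
      (Function.Surjective (q.baseChange B') ∧ ∃ l, l ∘ₗ (μ.baseChange B') = LinearMap.id)).mp
      ⟨hμ', s, hs⟩).2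
  obtain ⟨ρ, hρ⟩ := hsp
  let e := TensorProduct.AlgebraTensorModule.cancelBaseChange B B' κ κ A
  have hcomm : ∀ w, e ((μ.baseChange B').lTensor κ w) = (1 ⊗ₜ h) * e w := by
    intro w
    induction w with
    | zero => simp
    | add x y hx hy => simp only [map_add, hx, hy, mul_add]
    | tmul x y =>
      induction y with
      | zero => simp
      | add x y hx hy => simp only [map_add, hx, hy, mul_add, TensorProduct.tmul_add]
      | tmul b y =>
        simp [e, μ]
  obtain ⟨w, rfl⟩ := e.surjective z
  rw [← hcomm] at hz
  have h0 : (μ.baseChange B').lTensor κ w = 0 := e.injective (by rw [hz, map_zero])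
  have h1 : (ρ.lTensor κ) ((μ.baseChange B').lTensor κ w) = w := by
    rw [← LinearMap.comp_apply, ← LinearMap.lTensor_comp, hρ, LinearMap.lTensor_id, LinearMap.id_apply]
  rw [← h1, h0, map_zero, map_zero]

theorem aux_nontriv {B A κ : Type*} [CommRing B] [IsDomain B] [CommRing A] [Algebra B A]
    [Algebra.FiniteType B A] [Field κ] (hBA : Function.Injective (algebraMap B A)) :
    ∃ a : B, a ≠ 0 ∧ ∀ (_ : Algebra B κ), algebraMap B κ a ≠ 0 → Nontrivial (κ ⊗[B] A) := by
  obtain ⟨a, ha, hfree⟩ := aux_genfree (B := B) (A := A)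
  refine ⟨a, ha, fun _ hc => ?_⟩
  let B' := Localization.Away a
  let cl : B' →+* κ := IsLocalization.Away.lift a (IsUnit.mk0 _ hc)
  let _ : Algebra B' κ := cl.toAlgebra
  have : IsScalarTower B B' κ := IsScalarTower.of_algebraMap_eq fun b =>
    (IsLocalization.Away.lift_eq a (IsUnit.mk0 _ hc) b).symm
  have : Module.Flat B B' := IsLocalization.flat _ (Submonoid.powers a)
  have hB' : Nontrivial B' := cl.domain_nontrivial
  have : Nontrivial (B' ⊗[B] A) :=
    (Algebra.TensorProduct.includeLeft_injective (R := B) (S := B) (A := B') (B := A) hBA).nontrivial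
  let e := TensorProduct.AlgebraTensorModule.cancelBaseChange B B' κ κ A
  have : Nontrivial (κ ⊗[B'] (B' ⊗[B] A)) := inferInstance
  exact e.injective.nontrivial


theorem aux_prim {T A : Type*} [CommRing T] [IsDomain T] [CharZero T] [CommRing A] [IsDomain A]
    [Algebra T A] [Algebra.FiniteType T A] [Algebra.IsAlgebraic T A]
    (hTA : Function.Injective (algebraMap T A)) :
    ∃ (y : A) (g : Polynomial T) (d : T), RingHom.ker (Polynomial.aeval (R := T) y) = Ideal.span {g} ∧
      g ≠ 0 ∧ d ≠ 0 ∧ ∀ x : A, ∃ (n : ℕ) (Q : Polynomial T), d ^ n • x = Polynomial.aeval y Q := by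
  classical
  have : FaithfulSMul T A := (faithfulSMul_iff_algebraMap_injective T A).mpr hTA
  let L := FractionRing A
  let E := FractionRing T
  let _ : Algebra E L := FractionRing.liftAlgebra T L
  have : IsScalarTower T E L := inferInstance
  have : Algebra.IsAlgebraic T L := (IsFractionRing.isAlgebraic_iff' T A L).mp inferInstance
  have : Algebra.IsAlgebraic E L := (IsFractionRing.comap_isAlgebraic_iff (A := T)).mp inferInstance
  have : Algebra.EssFiniteType A L := Algebra.EssFiniteType.of_isLocalization L (nonZeroDivisors A)
  have : Algebra.EssFiniteType T L := Algebra.EssFiniteType.comp T A L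
  have : Algebra.EssFiniteType E L := Algebra.EssFiniteType.of_comp T E L
  have : Module.Finite E L := Algebra.finite_of_essFiniteType_of_isAlgebraic
  have : CharZero E := charZero_of_injective_algebraMap (IsFractionRing.injective T E)
  have hTL : Function.Injective (algebraMap T L) := FaithfulSMul.algebraMap_injective T L
  have hAL : Function.Injective (algebraMap A L) := IsFractionRing.injective A L
  obtain ⟨y, hy⟩ := Field.exists_primitive_element E L
  -- denominators of y
  obtain ⟨e1, he1, y1, hy1⟩ : ∃ e1 : T, e1 ≠ 0 ∧ ∃ y1 : A, algebraMap A L y1 = algebraMap T L e1 * y := by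
    obtain ⟨p, q, hq, rfl⟩ := IsFractionRing.div_surjective (A := A) y
    obtain ⟨e, he, r, hr⟩ := (Algebra.IsAlgebraic.isAlgebraic (R := T) q).exists_nonzero_dvd hq
    refine ⟨e, he, r * p, ?_⟩
    have hq0 : algebraMap A L q ≠ 0 := by
      simpa using nonZeroDivisors.ne_zero hq
    rw [IsScalarTower.algebraMap_apply T A L, hr, map_mul, map_mul,
      mul_comm (algebraMap A L q), mul_assoc, mul_div_cancel₀ _ hq0]
  set μ := minpoly E y with hμ
  obtain ⟨⟨e2, he2⟩, hintg⟩ := IsLocalization.exist_integer_multiples (nonZeroDivisors T)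
    (Finset.range (μ.natDegree + 1)) (fun i => μ.coeff i)
  have he20 : e2 ≠ 0 := nonZeroDivisors.ne_zero he2
  let e := e1 * e2
  have he0 : e ≠ 0 := mul_ne_zero he1 he20
  let y0 : A := algebraMap T A e2 * y1
  have hy0 : algebraMap A L y0 = algebraMap T L e * y := by
    simp only [y0, e, map_mul, hy1, ← IsScalarTower.algebraMap_apply]
    ring
  have hy0' : algebraMap A L y0 = algebraMap E L (algebraMap T E e) * y := by
    rw [hy0, ← IsScalarTower.algebraMap_apply]
  have hyint : IsIntegral E y := Algebra.IsIntegral.isIntegral y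
  have hlift : μ.scaleRoots (algebraMap T E e) ∈ Polynomial.lifts (algebraMap T E) := by
    rw [Polynomial.lifts_iff_coeff_lifts]
    intro i
    rw [Polynomial.coeff_scaleRoots]
    rcases lt_trichotomy i μ.natDegree with h | h | h
    · obtain ⟨w, hw⟩ := hintg i (by simp; omega)
      obtain ⟨j, hj⟩ : ∃ j, μ.natDegree - i = j + 1 := ⟨μ.natDegree - i - 1, by omega⟩
      refine ⟨w * e1 * e ^ j, ?_⟩
      simp only [Algebra.smul_def] at hw
      rw [hj, map_mul, map_mul, hw, pow_succ, map_pow]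
      simp only [e, map_mul]
      ring
    · refine ⟨1, ?_⟩
      have : μ.coeff i = 1 := by rw [h]; exact minpoly.monic hyint
      rw [this, h]; simp
    · exact ⟨0, by simp [Polynomial.coeff_eq_zero_of_natDegree_lt h]⟩
  obtain ⟨g, hg, hgd, hgm⟩ := Polynomial.lifts_and_natDegree_eq_and_monic hlift
    ((Polynomial.monic_scaleRoots_iff _).mpr (minpoly.monic hyint))
  rw [Polynomial.natDegree_scaleRoots] at hgd
  have hev : ∀ p : Polynomial T, algebraMap A L (Polynomial.aeval y0 p) =
      Polynomial.aeval (algebraMap A L y0) (p.map (algebraMap T E)) := by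
    intro p
    rw [Polynomial.aeval_map_algebraMap, Polynomial.aeval_algebraMap_apply]
  have hprim : IntermediateField.adjoin E {algebraMap A L y0} = ⊤ := by
    rw [eq_top_iff, ← hy, IntermediateField.adjoin_simple_le_iff]
    have hm := IntermediateField.mem_adjoin_simple_self E (algebraMap A L y0)
    have hne : algebraMap E L (algebraMap T E e) ≠ 0 := by
      rw [← IsScalarTower.algebraMap_apply]
      simpa using he0
    have : y = (algebraMap E L (algebraMap T E e))⁻¹ * algebraMap A L y0 := by
      rw [hy0', inv_mul_cancel_left₀ hne]
    rw [this]
    exact mul_mem (inv_mem (IntermediateField.algebraMap_mem _ _)) hm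
  have hg0 : Polynomial.aeval y0 g = 0 := by
    apply hAL
    rw [hev, hg, hy0', map_zero]
    exact Polynomial.scaleRoots_aeval_eq_zero (minpoly.aeval E y)
  have hdeg : (minpoly E (algebraMap A L y0)).natDegree = g.natDegree := by
    rw [hgd, (Field.primitive_element_iff_minpoly_natDegree_eq E _).mp hprim,
      (Field.primitive_element_iff_minpoly_natDegree_eq E _).mp hy]
  have hker : RingHom.ker (Polynomial.aeval (R := T) y0) = Ideal.span {g} := by
    apply le_antisymm
    · intro p hp
      rw [RingHom.mem_ker] at hp
      rw [Ideal.mem_span_singleton, ← Polynomial.modByMonic_eq_zero_iff_dvd hgm]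
      set r := p %ₘ g with hr
      have hr0 : Polynomial.aeval y0 r = 0 := by
        rw [hr, Polynomial.modByMonic_eq_sub_mul_div, map_sub, map_mul, hg0, hp]
        simp
      by_contra hne
      have hinjTE : Function.Injective (algebraMap T E) := IsFractionRing.injective T E
      have h1 : (minpoly E (algebraMap A L y0)).degree ≤ (r.map (algebraMap T E)).degree :=
        minpoly.degree_le_of_ne_zero E _ ((Polynomial.map_ne_zero_iff hinjTE).mpr hne)
          (by rw [← hev, hr0, map_zero])
      rw [Polynomial.degree_map_eq_of_injective hinjTE] at h1
      have h2 : r.degree < g.degree := Polynomial.degree_modByMonic_lt p hgm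
      have h3 : (minpoly E (algebraMap A L y0)).degree = g.degree := by
        rw [Polynomial.degree_eq_natDegree hgm.ne_zero, ← hdeg, Polynomial.degree_eq_natDegree]
        exact minpoly.ne_zero (Algebra.IsIntegral.isIntegral _)
      rw [h3] at h1
      exact absurd h2 (not_lt.mpr h1)
    · rw [Ideal.span_singleton_le_iff_mem]
      exact hg0
  have hx : ∀ x : A, ∃ d : T, d ≠ 0 ∧ ∃ Q : Polynomial T, d • x = Polynomial.aeval y0 Q := by
    intro x
    have htop := Algebra.adjoin_eq_top_of_primitive_element
      (Algebra.IsAlgebraic.isAlgebraic (R := E) (algebraMap A L y0)) hprim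
    have hmem : algebraMap A L x ∈ Algebra.adjoin E {algebraMap A L y0} := by
      rw [htop]; trivial
    rw [Algebra.adjoin_singleton_eq_range_aeval] at hmem
    obtain ⟨P, hP⟩ := hmem
    obtain ⟨b, hb, hb'⟩ := IsLocalization.integerNormalization_spec (nonZeroDivisors T) P
    refine ⟨b, nonZeroDivisors.ne_zero hb,
      IsLocalization.integerNormalization (nonZeroDivisors T) P, hAL ?_⟩
    · rw [hev, hb', ← IsScalarTower.algebraMap_smul E b P,
        map_smul (Polynomial.aeval (R := E) (algebraMap A L y0))]
      change _ = _ • (Polynomial.aeval _).toRingHom P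
      rw [hP, IsScalarTower.algebraMap_smul E b, Algebra.smul_def, map_mul, Algebra.smul_def,
        ← IsScalarTower.algebraMap_apply]
  choose D hD0 hD using hx
  obtain ⟨s, hs⟩ := ‹Algebra.FiniteType T A›
  let d := ∏ x ∈ s, D x
  refine ⟨y0, g, d, hker, hgm.ne_zero, Finset.prod_ne_zero_iff.mpr fun x _ => hD0 x, fun x => ?_⟩
  have hxs : x ∈ Algebra.adjoin T (s : Set A) := by rw [hs]; trivial
  induction hxs using Algebra.adjoin_induction with
  | mem x hx =>
    obtain ⟨Q, hQ⟩ := hD x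
    obtain ⟨w, hw⟩ := Finset.dvd_prod_of_mem D hx
    refine ⟨1, w • Q, ?_⟩
    have : d = w * D x := by rw [mul_comm]; exact hw
    rw [map_smul, ← hQ, pow_one, this, mul_smul]
  | algebraMap r => exact ⟨0, Polynomial.C r, by simp⟩
  | add x y _ _ hx hy =>
    obtain ⟨n, P, hP⟩ := hx
    obtain ⟨n', Q, hQ⟩ := hy
    refine ⟨n + n', d ^ n' • P + d ^ n • Q, ?_⟩
    rw [map_add, map_smul, map_smul, ← hP, ← hQ, smul_smul, smul_smul, smul_add, ← pow_add, ← pow_add,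
      add_comm n' n]
  | mul x y _ _ hx hy =>
    obtain ⟨n, P, hP⟩ := hx
    obtain ⟨n', Q, hQ⟩ := hy
    refine ⟨n + n', P * Q, ?_⟩
    rw [map_mul, ← hP, ← hQ, pow_add, smul_mul_smul_comm]

theorem aux_hyper {B : Type*} {A : Type*} [CommRing B] [IsDomain B] [CharZero B] [CommRing A]
    [IsDomain A] [Algebra B A] [Algebra.FiniteType B A]
    (hBA : Function.Injective (algebraMap B A)) :
    ∃ (t : Set A) (_ : Finite t) (φ : MvPolynomial (Option t) B →ₐ[B] A)
      (g h : MvPolynomial (Option t) B),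
      RingHom.ker φ = Ideal.span {g} ∧ g ≠ 0 ∧ φ h ≠ 0 ∧ ∀ x : A, ∃ (n : ℕ) (Q : _), φ h ^ n * x = φ Q := by
  classical
  have : FaithfulSMul B A := (faithfulSMul_iff_algebraMap_injective B A).mpr hBA
  obtain ⟨s, hs⟩ := ‹Algebra.FiniteType B A›
  have : Algebra.IsAlgebraic (Algebra.adjoin B (s : Set A)) A := by
    refine ⟨fun x => ?_⟩
    exact isAlgebraic_algebraMap (⟨x, by rw [hs]; trivial⟩ : Algebra.adjoin B (s : Set A))
  obtain ⟨t, hts, ht⟩ := exists_isTranscendenceBasis_subset (R := B) (s : Set A)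
  have htf : Finite t := (s.finite_toSet.subset hts).to_subtype
  let T := MvPolynomial t B
  let _ : Algebra T A := (aeval (R := B) ((↑) : t → A)).toAlgebra
  have : IsScalarTower B T A := IsScalarTower.of_algebraMap_eq fun b => (by
    change _ = aeval _ (C b)
    simp)
  have hTA : Function.Injective (algebraMap T A) := ht.1
  have : Algebra.IsAlgebraic (Algebra.adjoin B (Set.range ((↑) : t → A))) A := ht.isAlgebraic
  have : Algebra.IsAlgebraic T A := by
    refine Algebra.IsAlgebraic.of_ringHom_of_comp_eq (ht.1.aevalEquiv) (RingHom.id A)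
      ht.1.aevalEquiv.surjective Function.injective_id ?_
    ext p <;> simp [T, RingHom.algebraMap_toAlgebra]
  have : Algebra.FiniteType B A := ⟨s, hs⟩
  have : Algebra.FiniteType T A := Algebra.FiniteType.of_restrictScalars_finiteType B T A
  obtain ⟨y, g, d, hker, hg0, hd, hx⟩ := aux_prim hTA
  let ev : Polynomial T →ₐ[B] A := (Polynomial.aeval (R := T) y).restrictScalars B
  let eq := optionEquivLeft B t
  refine ⟨t, htf, ev.comp eq.toAlgHom, eq.symm g, eq.symm (Polynomial.C d), ?_, by simpa using hg0, ?_, fun x => ?_⟩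
  · ext p
    have : p ∈ RingHom.ker (ev.comp eq.toAlgHom) ↔ eq p ∈ RingHom.ker (Polynomial.aeval (R := T) y) := Iff.rfl
    rw [this, hker, Ideal.mem_span_singleton, Ideal.mem_span_singleton]
    constructor
    · intro h
      have := map_dvd eq.symm h
      simpa using this
    · intro h
      have := map_dvd eq h
      simpa using this
  · have : (ev.comp eq.toAlgHom) (eq.symm (Polynomial.C d)) = algebraMap T A d := by
      simp [ev]
    rw [this]
    exact fun h0 => hd (hTA (by rw [h0, map_zero]))
  · obtain ⟨n, Q, hQ⟩ := hx x
    refine ⟨n, eq.symm Q, ?_⟩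
    have : (ev.comp eq.toAlgHom) (eq.symm (Polynomial.C d)) = algebraMap T A d := by
      simp [ev]
    rw [this, ← map_pow, ← Algebra.smul_def, hQ]
    simp [ev]


theorem aux_tors {B S A κ : Type*} [CommRing B] [CommRing S] [CommRing A] [CommRing κ]
    [Algebra B S] [Algebra B A] [Algebra B κ] (ι : S →ₐ[B] A) (hι : Function.Injective ι)
    (s : S) (hs : ∀ x : A, ∃ (n : ℕ) (q : S), ι s ^ n * x = ι q) (z : κ ⊗[B] S)
    (hz : Algebra.TensorProduct.map (AlgHom.id κ κ) ι z = 0) :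
    ∃ m : ℕ, (1 ⊗ₜ s) ^ m * z = 0 := by
  let Ah := Localization.Away (ι s)
  let j : S →ₐ[B] Ah := (IsScalarTower.toAlgHom B A Ah).comp ι
  let _ : Algebra S Ah := j.toRingHom.toAlgebra
  have hj : ∀ x, algebraMap S Ah x = algebraMap A Ah (ι x) := fun x => rfl
  have : IsScalarTower B S Ah := IsScalarTower.of_algebraMap_eq fun b => (j.commutes b).symm
  have : IsLocalization.Away s Ah := by
    refine (isLocalization_iff _ _).mpr ⟨?_, ?_, ?_⟩
    · rintro ⟨_, n, rfl⟩
      change IsUnit (algebraMap S Ah (s ^ n))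
      rw [map_pow]
      exact (IsLocalization.Away.algebraMap_isUnit (ι s)).pow n
    · intro z
      obtain ⟨n, a, ha⟩ := IsLocalization.Away.surj (ι s) z
      obtain ⟨m, q, hq⟩ := hs a
      refine ⟨(q, ⟨s ^ (n + m), n + m, rfl⟩), ?_⟩
      change z * algebraMap S Ah (s ^ (n + m)) = algebraMap S Ah q
      rw [hj, hj, ← hq, map_mul, ← ha, map_pow, map_pow, map_pow, pow_add]
      ring
    · intro x y hxy
      rw [hj, hj] at hxy
      obtain ⟨⟨_, n, rfl⟩, hn⟩ := (IsLocalization.eq_iff_exists (Submonoid.powers (ι s)) Ah).mp hxy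
      refine ⟨⟨s ^ n, n, rfl⟩, hι ?_⟩
      simpa using hn
  let e := IsLocalization.Away.tensorProductEquivTMulRight B κ s Ah
  have h1 : ∀ w : κ ⊗[B] S, e (Algebra.TensorProduct.map (AlgHom.id κ κ) j w) =
      algebraMap (κ ⊗[B] S) (Localization.Away ((1 : κ) ⊗ₜ[B] s)) w := by
    intro w
    induction w with
    | zero => simp
    | add x y hx hy => rw [map_add, map_add, hx, hy, map_add]
    | tmul x y =>
      rw [Algebra.TensorProduct.map_tmul]
      exact IsLocalization.Away.tensorProductEquivTMulRight_tmul ..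
  have h2 : Algebra.TensorProduct.map (AlgHom.id κ κ) j z = 0 := by
    have : Algebra.TensorProduct.map (AlgHom.id κ κ) j =
      (Algebra.TensorProduct.map (AlgHom.id κ κ) (IsScalarTower.toAlgHom B A Ah)).comp
        (Algebra.TensorProduct.map (AlgHom.id κ κ) ι) := by
      ext; simp [j]
    rw [this, AlgHom.comp_apply, hz, map_zero]
  have h3 := h1 z
  rw [h2, map_zero] at h3
  obtain ⟨⟨_, m, rfl⟩, hm⟩ :=
    (IsLocalization.map_eq_zero_iff (Submonoid.powers ((1 : κ) ⊗ₜ[B] s)) _ z).mp h3.symm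
  exact ⟨m, hm⟩

theorem aux_ker {B A κ σ : Type*} [CommRing B] [CommRing A] [CommRing κ]
    [Algebra B A] [Algebra B κ] (φ : MvPolynomial σ B →ₐ[B] A) (g : MvPolynomial σ B)
    (hker : RingHom.ker φ = Ideal.span {g}) (z : κ ⊗[B] MvPolynomial σ B)
    (hz : Algebra.TensorProduct.map (AlgHom.id B κ) φ.rangeRestrict z = 0) :
    (1 ⊗ₜ g) ∣ z := by
  have h := Algebra.TensorProduct.lTensor_ker (A := κ) φ.rangeRestrict φ.rangeRestrict_surjective
  have h1 : RingHom.ker φ.rangeRestrict = Ideal.span {g} := by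
    rw [← hker]
    ext x
    simp [RingHom.mem_ker, Subtype.ext_iff]
  rw [h1, Ideal.map_span, Set.image_singleton] at h
  have : z ∈ RingHom.ker (Algebra.TensorProduct.map (AlgHom.id B κ) φ.rangeRestrict) := hz
  rw [h, Ideal.mem_span_singleton] at this
  exact this

theorem aux_gprime {B A K σ : Type*} [CommRing B] [IsDomain B] [CommRing A] [Field K]
    [Algebra B A] [Algebra B K] [Module.Flat B K] (hBK : Function.Injective (algebraMap B K))
    (hdom : IsDomain (K ⊗[B] A)) (φ : MvPolynomial σ B →ₐ[B] A) (g : MvPolynomial σ B)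
    (hg : g ≠ 0) (hker : RingHom.ker φ = Ideal.span {g}) :
    Prime (map (algebraMap B K) g) := by
  let e := algebraTensorAlgEquiv (σ := σ) B K
  let Φ : MvPolynomial σ K →ₐ[B] K ⊗[B] A :=
    (Algebra.TensorProduct.map (AlgHom.id B K) φ).comp (e.symm.toAlgHom.restrictScalars B)
  have hΦg : Φ (map (algebraMap B K) g) = 0 := by
    have : φ g = 0 := by
      have : g ∈ RingHom.ker φ := by rw [hker]; exact Ideal.mem_span_singleton_self g
      exact this
    simp [Φ, e, this]
  have hΦ : ∀ p, Φ p = 0 → map (algebraMap B K) g ∣ p := by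
    intro p hp
    have h1 : Algebra.TensorProduct.map (AlgHom.id B K) φ.rangeRestrict (e.symm p) = 0 := by
      have hinj : Function.Injective (LinearMap.lTensor K φ.range.val.toLinearMap) :=
        Module.Flat.lTensor_preserves_injective_linearMap _ Subtype.val_injective
      apply hinj
      rw [map_zero, ← hp]
      change ((Algebra.TensorProduct.map (AlgHom.id B K) φ.range.val).comp
        (Algebra.TensorProduct.map (AlgHom.id B K) φ.rangeRestrict)) (e.symm p) =
          Algebra.TensorProduct.map (AlgHom.id B K) φ (e.symm p)
      congr 1
      ext <;> simp
    have := map_dvd e (aux_ker φ g hker _ h1)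
    simpa [e] using this
  refine ⟨?_, ?_, ?_⟩
  · exact (map_ne_zero_iff _ (map_injective _ hBK)).mpr hg
  · intro hu
    have := hu.map Φ
    rw [hΦg] at this
    exact not_isUnit_zero this
  · intro p q ⟨r, hr⟩
    have : Φ p * Φ q = 0 := by
      rw [← map_mul, hr, map_mul, hΦg, zero_mul]
    rcases mul_eq_zero.mp this with h | h
    · exact Or.inl (hΦ p h)
    · exact Or.inr (hΦ q h)

theorem aux_dom {B A κ σ : Type*} [CommRing B] [CommRing A] [Field κ]
    [Algebra B A] [Algebra B κ] (φ : MvPolynomial σ B →ₐ[B] A) (g h : MvPolynomial σ B)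
    (hker : RingHom.ker φ = Ideal.span {g}) (hgp : Prime (map (algebraMap B κ) g))
    (hh : ∀ x : A, ∃ (n : ℕ) (Q : MvPolynomial σ B), φ h ^ n * x = φ Q)
    (hreg : ∀ z : κ ⊗[B] A, (1 ⊗ₜ φ h) * z = 0 → z = 0) (hnt : Nontrivial (κ ⊗[B] A)) :
    IsDomain (κ ⊗[B] A) := by
  let e := algebraTensorAlgEquiv (σ := σ) B κ
  let Φ : MvPolynomial σ κ →ₐ[B] κ ⊗[B] A :=
    (Algebra.TensorProduct.map (AlgHom.id B κ) φ).comp (e.symm.toAlgHom.restrictScalars B)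
  have hΦm : ∀ p, Φ (map (algebraMap B κ) p) = 1 ⊗ₜ φ p := by
    intro p
    simp [Φ, e]
  have hΦg : Φ (map (algebraMap B κ) g) = 0 := by
    have : φ g = 0 := by
      have : g ∈ RingHom.ker φ := by rw [hker]; exact Ideal.mem_span_singleton_self g
      exact this
    rw [hΦm, this, TensorProduct.tmul_zero]
  have hdvd : ∀ p, map (algebraMap B κ) g ∣ p → Φ p = 0 := by
    rintro _ ⟨r, rfl⟩
    rw [map_mul, hΦg, zero_mul]
  have hregn : ∀ (n : ℕ) (z : κ ⊗[B] A), (1 ⊗ₜ φ h) ^ n * z = 0 → z = 0 := by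
    intro n
    induction n with
    | zero => intro z hz; simpa using hz
    | succ n ih =>
      intro z hz
      rw [pow_succ, mul_assoc] at hz
      exact hreg _ (ih _ hz)
  have hgh : ¬ map (algebraMap B κ) g ∣ map (algebraMap B κ) h := by
    intro hd
    have h0 := hdvd _ hd
    rw [hΦm] at h0
    have := hreg 1 (by rw [h0, zero_mul])
    exact one_ne_zero this
  have hker' : ∀ p, Φ p = 0 → map (algebraMap B κ) g ∣ p := by
    intro p hp
    obtain ⟨m, hm⟩ := aux_tors (κ := κ) φ.range.val Subtype.val_injective (φ.rangeRestrict h)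
      (fun x => by
        obtain ⟨n, Q, hQ⟩ := hh x
        exact ⟨n, φ.rangeRestrict Q, hQ⟩)
      (Algebra.TensorProduct.map (AlgHom.id B κ) φ.rangeRestrict (e.symm p)) (by
        rw [← hp]
        change ((Algebra.TensorProduct.map (AlgHom.id B κ) φ.range.val).comp
          (Algebra.TensorProduct.map (AlgHom.id B κ) φ.rangeRestrict)) (e.symm p) =
            Algebra.TensorProduct.map (AlgHom.id B κ) φ (e.symm p)
        congr 1
        ext <;> simp)
    have h1 : Algebra.TensorProduct.map (AlgHom.id B κ) φ.rangeRestrict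
        ((1 ⊗ₜ h) ^ m * e.symm p) = 0 := by
      rw [map_mul, map_pow, Algebra.TensorProduct.map_tmul, map_one]
      exact hm
    have h2 := map_dvd e (aux_ker φ g hker _ h1)
    have h3 : map (algebraMap B κ) g ∣ map (algebraMap B κ) h ^ m * p := by
      simpa [e] using h2
    rcases hgp.dvd_or_dvd h3 with h4 | h4
    · exact absurd (hgp.dvd_of_dvd_pow h4) hgh
    · exact h4
  have hsurj : ∀ z : κ ⊗[B] A, ∃ (n : ℕ) (p : MvPolynomial σ κ), (1 ⊗ₜ φ h) ^ n * z = Φ p := by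
    intro z
    induction z with
    | zero => exact ⟨0, 0, by simp⟩
    | add x y hx hy =>
      obtain ⟨n, p, hp⟩ := hx
      obtain ⟨m, q, hq⟩ := hy
      refine ⟨n + m, map (algebraMap B κ) h ^ m * p + map (algebraMap B κ) h ^ n * q, ?_⟩
      rw [map_add, map_mul, map_mul, map_pow, map_pow, hΦm, ← hp, ← hq]
      ring
    | tmul c x =>
      obtain ⟨n, Q, hQ⟩ := hh x
      refine ⟨n, e (c ⊗ₜ Q), ?_⟩
      have : Φ (e (c ⊗ₜ Q)) = c ⊗ₜ φ Q := by simp [Φ]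
      rw [this, Algebra.TensorProduct.tmul_pow, Algebra.TensorProduct.tmul_mul_tmul, hQ, one_pow,
        one_mul]
  have : NoZeroDivisors (κ ⊗[B] A) := by
    refine ⟨fun {u v} huv => ?_⟩
    obtain ⟨n, p, hp⟩ := hsurj u
    obtain ⟨m, q, hq⟩ := hsurj v
    have h1 : Φ (p * q) = 0 := by
      rw [map_mul, ← hp, ← hq]
      linear_combination (1 ⊗ₜ φ h : κ ⊗[B] A) ^ (n + m) * huv
    rcases hgp.dvd_or_dvd (hker' _ h1) with h2 | h2
    · exact Or.inl (hregn n u (by rw [hp, hdvd _ h2]))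
    · exact Or.inr (hregn m v (by rw [hq, hdvd _ h2]))
  exact NoZeroDivisors.to_isDomain _


theorem aux_tm {B C κ : Type*} [CommRing B] [CommRing C] [CommRing κ] [Algebra B C] [Algebra B κ]
    (b : B) : (algebraMap B C b ⊗ₜ 1 : C ⊗[B] κ) = 1 ⊗ₜ algebraMap B κ b := by
  rw [Algebra.algebraMap_eq_smul_one, TensorProduct.smul_tmul, Algebra.algebraMap_eq_smul_one]

theorem aux_inj {B C κ L R : Type*} [CommRing B] [CommRing C] [CommRing κ] [CommRing L] [CommRing R]
    [Algebra B C] [Algebra B κ] [Algebra B L] [Algebra C L] [Algebra κ L] [IsScalarTower B C L]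
    [IsScalarTower B κ L] [Algebra C R] [Algebra B R] [IsScalarTower B C R] [Module.Flat C R]
    (hj : Function.Injective (Algebra.TensorProduct.lift (Algebra.ofId C L)
      (IsScalarTower.toAlgHom B κ L) (fun _ _ => Commute.all _ _) : C ⊗[B] κ →ₐ[C] L)) :
    ∃ Ψ : R ⊗[B] κ →+* R ⊗[C] L, Function.Injective Ψ ∧ ∀ r c, Ψ (r ⊗ₜ c) = r ⊗ₜ algebraMap κ L c := by
  let Ψ : R ⊗[B] κ →ₐ[R] R ⊗[C] L := Algebra.TensorProduct.lift (Algebra.ofId R _)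
    ((Algebra.TensorProduct.includeRight.restrictScalars B).comp (IsScalarTower.toAlgHom B κ L))
    (fun _ _ => Commute.all _ _)
  have hΨ : ∀ r c, Ψ (r ⊗ₜ c) = r ⊗ₜ algebraMap κ L c := by
    intro r c
    simp [Ψ, Algebra.ofId_apply]
  refine ⟨Ψ.toRingHom, ?_, hΨ⟩
  let j : C ⊗[B] κ →ₐ[C] L := Algebra.TensorProduct.lift (Algebra.ofId C L)
      (IsScalarTower.toAlgHom B κ L) (fun _ _ => Commute.all _ _)
  have h1 := Module.Flat.lTensor_preserves_injective_linearMap (M := R) j.toLinearMap hj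
  let e := TensorProduct.AlgebraTensorModule.cancelBaseChange B C R R κ
  have h2 : ∀ z, Ψ z = LinearMap.lTensor R j.toLinearMap (e.symm z) := by
    intro z
    induction z with
    | zero => simp
    | add x y hx hy => rw [map_add, map_add, map_add, hx, hy]
    | tmul r c =>
      rw [hΨ]
      simp [e, j]
  intro x y hxy
  have : Ψ x = Ψ y := hxy
  rw [h2, h2] at this
  exact e.symm.injective (h1 this)

theorem aux_jinj {B κ : Type*} [CommRing B] [Field κ] [Algebra B κ] (f : Polynomial B)
    [Algebra (Localization.Away f) (RatFunc κ)]
    [IsScalarTower B (Localization.Away f) (RatFunc κ)]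
    (hσ : (algebraMap (Localization.Away f) (RatFunc κ)).comp
        (algebraMap (Polynomial B) (Localization.Away f)) =
      (algebraMap (Polynomial κ) (RatFunc κ)).comp (Polynomial.mapRingHom (algebraMap B κ))) :
    Function.Injective (Algebra.TensorProduct.lift (Algebra.ofId (Localization.Away f) (RatFunc κ))
      (IsScalarTower.toAlgHom B κ (RatFunc κ)) (fun _ _ => Commute.all _ _) :
      Localization.Away f ⊗[B] κ →ₐ[Localization.Away f] RatFunc κ) := by
  set C := Localization.Away f with hC
  let j : C ⊗[B] κ →ₐ[C] RatFunc κ := Algebra.TensorProduct.lift (Algebra.ofId C (RatFunc κ))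
      (IsScalarTower.toAlgHom B κ (RatFunc κ)) (fun _ _ => Commute.all _ _)
  have hjt : ∀ c x, j (c ⊗ₜ x) = algebraMap C (RatFunc κ) c * algebraMap κ (RatFunc κ) x := by
    intro c x
    simp [j, Algebra.ofId_apply]
  let ε : Polynomial κ →+* C ⊗[B] κ := Polynomial.eval₂RingHom
    (Algebra.TensorProduct.includeRight : κ →ₐ[B] C ⊗[B] κ).toRingHom
    (algebraMap (Polynomial B) C Polynomial.X ⊗ₜ 1)
  have hjε : j.toRingHom.comp ε = algebraMap (Polynomial κ) (RatFunc κ) := by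
    apply Polynomial.ringHom_ext
    · intro a
      simp only [RingHom.comp_apply, ε, Polynomial.coe_eval₂RingHom, Polynomial.eval₂_C]
      change j (1 ⊗ₜ a) = _
      rw [hjt, map_one, one_mul]
      rfl
    · simp only [RingHom.comp_apply, ε, Polynomial.coe_eval₂RingHom, Polynomial.eval₂_X]
      change j (_ ⊗ₜ 1) = _
      rw [hjt, map_one, mul_one]
      have := RingHom.congr_fun hσ Polynomial.X
      simpa using this
  have hεm : ε.comp (Polynomial.mapRingHom (algebraMap B κ)) =
      (Algebra.TensorProduct.includeLeftRingHom : C →+* C ⊗[B] κ).comp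
        (algebraMap (Polynomial B) C) := by
    apply Polynomial.ringHom_ext
    · intro a
      simp only [RingHom.comp_apply, ε, Polynomial.coe_eval₂RingHom, Polynomial.coe_mapRingHom,
        Polynomial.map_C, Polynomial.eval₂_C]
      change (1 ⊗ₜ algebraMap B κ a : C ⊗[B] κ) = algebraMap (Polynomial B) C (Polynomial.C a) ⊗ₜ 1
      rw [← Polynomial.algebraMap_eq, ← IsScalarTower.algebraMap_apply, aux_tm]
    · simp [ε]
  let F : C := algebraMap (Polynomial B) C f
  have hF : IsUnit F := IsLocalization.Away.algebraMap_isUnit f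
  have hz : ∀ z : C ⊗[B] κ, ∃ (n : ℕ) (p : Polynomial κ), (F ⊗ₜ 1) ^ n * z = ε p := by
    intro z
    have hεF : ε (f.map (algebraMap B κ)) = F ⊗ₜ 1 := RingHom.congr_fun hεm f
    induction z with
    | zero => exact ⟨0, 0, by simp⟩
    | add x y hx hy =>
      obtain ⟨n, p, hp⟩ := hx
      obtain ⟨m, q, hq⟩ := hy
      refine ⟨n + m, f.map (algebraMap B κ) ^ m * p + f.map (algebraMap B κ) ^ n * q, ?_⟩
      rw [map_add, map_mul, map_mul, map_pow, map_pow, hεF, ← hp, ← hq]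
      ring
    | tmul c x =>
      obtain ⟨n, q, hq⟩ := IsLocalization.Away.surj f c
      refine ⟨n, q.map (algebraMap B κ) * Polynomial.C x, ?_⟩
      have h1 : ε (q.map (algebraMap B κ)) = algebraMap (Polynomial B) C q ⊗ₜ 1 :=
        RingHom.congr_fun hεm q
      have h2 : ε (Polynomial.C x) = 1 ⊗ₜ x := by
        simp [ε]
      rw [map_mul, h1, h2, Algebra.TensorProduct.tmul_pow, Algebra.TensorProduct.tmul_mul_tmul,
        Algebra.TensorProduct.tmul_mul_tmul, ← hq, one_pow, mul_one, mul_comm c]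
  change Function.Injective j
  rw [injective_iff_map_eq_zero]
  intro z hz0
  obtain ⟨n, p, hp⟩ := hz z
  have h1 : algebraMap (Polynomial κ) (RatFunc κ) p = 0 := by
    rw [← hjε]
    change j (ε p) = 0
    rw [← hp, map_mul, hz0, mul_zero]
  have h2 : p = 0 := by
    simpa using h1
  rw [h2, map_zero] at hp
  have hu : IsUnit ((F ⊗ₜ[B] (1 : κ)) ^ n) := 
    (hF.map (Algebra.TensorProduct.includeLeftRingHom : C →+* C ⊗[B] κ)).pow n
  exact (hu.mul_right_eq_zero).mp hp

theorem aux_compare {B κ R : Type*} [CommRing B] [Field κ] [Algebra B κ] (f : Polynomial B)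
    [Algebra (Localization.Away f) (RatFunc κ)]
    [CommRing R] [Algebra (Localization.Away f) R] [Algebra B R]
    [IsScalarTower B (Localization.Away f) R] [Module.Flat (Localization.Away f) R]
    (hσ : (algebraMap (Localization.Away f) (RatFunc κ)).comp
        (algebraMap (Polynomial B) (Localization.Away f)) =
      (algebraMap (Polynomial κ) (RatFunc κ)).comp (Polynomial.mapRingHom (algebraMap B κ))) :
    ∃ Ψ : κ ⊗[B] R →+* R ⊗[Localization.Away f] RatFunc κ, Function.Injective Ψ ∧
      ∀ z, ∃ u, IsUnit u ∧ ∃ w, u * z = Ψ w := by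
  set C := Localization.Away f with hC
  have hB : ∀ b, algebraMap C (RatFunc κ) (algebraMap (Polynomial B) C (Polynomial.C b)) =
      algebraMap κ (RatFunc κ) (algebraMap B κ b) := by
    intro b
    have := RingHom.congr_fun hσ (Polynomial.C b)
    simpa using this
  have : IsScalarTower B C (RatFunc κ) := IsScalarTower.of_algebraMap_eq fun b => by
    rw [IsScalarTower.algebraMap_apply B (Polynomial B) C, Polynomial.algebraMap_eq, hB,
      ← IsScalarTower.algebraMap_apply]
  obtain ⟨Ψ, hinj, hΨ⟩ := aux_inj (R := R) (aux_jinj f hσ)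
  let e := Algebra.TensorProduct.comm B κ R
  refine ⟨Ψ.comp e.toRingHom, hinj.comp e.injective, ?_⟩
  suffices H : ∀ z : R ⊗[C] RatFunc κ, ∃ d : Polynomial κ, d ≠ 0 ∧
      ∃ w, (1 ⊗ₜ algebraMap _ (RatFunc κ) d) * z = Ψ w by
    intro z
    obtain ⟨d, hd, w, hw⟩ := H z
    refine ⟨1 ⊗ₜ algebraMap _ (RatFunc κ) d, ?_, e.symm w, ?_⟩
    · have : IsUnit (algebraMap _ (RatFunc κ) d) := IsUnit.mk0 _ (by simpa using hd)
      exact this.map (Algebra.TensorProduct.includeRight : RatFunc κ →ₐ[C] R ⊗[C] RatFunc κ)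
    · rw [hw]
      change _ = Ψ (e (e.symm w))
      rw [e.apply_symm_apply]
  let η : Polynomial κ →+* R ⊗[B] κ := Polynomial.eval₂RingHom
    (Algebra.TensorProduct.includeRight : κ →ₐ[B] R ⊗[B] κ).toRingHom
    (algebraMap C R (algebraMap (Polynomial B) C Polynomial.X) ⊗ₜ 1)
  have hη : Ψ.comp η = (Algebra.TensorProduct.includeRight :
      RatFunc κ →ₐ[C] R ⊗[C] RatFunc κ).toRingHom.comp (algebraMap (Polynomial κ) (RatFunc κ)) := by
    apply Polynomial.ringHom_ext
    · intro a
      simp only [RingHom.comp_apply, η, Polynomial.coe_eval₂RingHom, Polynomial.eval₂_C]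
      change Ψ (1 ⊗ₜ a) = 1 ⊗ₜ _
      rw [hΨ]
      rfl
    · simp only [RingHom.comp_apply, η, Polynomial.coe_eval₂RingHom, Polynomial.eval₂_X]
      rw [hΨ, map_one, aux_tm]
      change 1 ⊗ₜ _ = 1 ⊗ₜ _
      congr 1
      have := RingHom.congr_fun hσ Polynomial.X
      simpa using this
  have hη' : ∀ p, Ψ (η p) = 1 ⊗ₜ algebraMap _ (RatFunc κ) p := fun p => RingHom.congr_fun hη p
  intro z
  induction z with
  | zero => exact ⟨1, one_ne_zero, 0, by simp⟩
  | add x y hx hy =>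
    obtain ⟨d, hd, w, hw⟩ := hx
    obtain ⟨d', hd', w', hw'⟩ := hy
    refine ⟨d * d', mul_ne_zero hd hd', η d' * w + η d * w', ?_⟩
    rw [map_add, map_mul Ψ, map_mul Ψ, ← hw, ← hw', hη', hη', map_mul,
      ← one_mul (1 : R), ← Algebra.TensorProduct.tmul_mul_tmul]
    simp only [one_mul]
    ring
  | tmul r x =>
    obtain ⟨p, q, hq, rfl⟩ := IsFractionRing.div_surjective (A := Polynomial κ) x
    have hq0 : algebraMap _ (RatFunc κ) q ≠ 0 := by simpa using nonZeroDivisors.ne_zero hq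
    refine ⟨q, nonZeroDivisors.ne_zero hq, (r ⊗ₜ 1) * η p, ?_⟩
    rw [map_mul, hη', hΨ, Algebra.TensorProduct.tmul_mul_tmul, Algebra.TensorProduct.tmul_mul_tmul,
      mul_div_cancel₀ _ hq0, map_one, mul_comm 1 r, one_mul]

theorem aux_transfer {D N : Type*} [CommRing D] [IsDomain D] [CommRing N] (Ψ : D →+* N)
    (hΨ : Function.Injective Ψ) (h : ∀ z, ∃ u, IsUnit u ∧ ∃ w, u * z = Ψ w) : IsDomain N := by
  have : Nontrivial N := hΨ.nontrivial
  have : NoZeroDivisors N := by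
    refine ⟨fun {x y} hxy => ?_⟩
    obtain ⟨u, hu, w, hw⟩ := h x
    obtain ⟨u', hu', w', hw'⟩ := h y
    have h1 : Ψ (w * w') = 0 := by
      rw [map_mul, ← hw, ← hw']
      linear_combination u * u' * hxy
    rcases mul_eq_zero.mp ((map_eq_zero_iff _ hΨ).mp h1) with h0 | h0
    · rw [h0, map_zero] at hw
      exact Or.inl (hu.mul_right_eq_zero.mp hw)
    · rw [h0, map_zero] at hw'
      exact Or.inr (hu'.mul_right_eq_zero.mp hw')
  exact NoZeroDivisors.to_isDomain _


theorem aux_main {B A K κ : Type*} [CommRing B] [IsDomain B] [CharZero B] [CommRing A] [IsDomain A]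
    [Algebra B A] [Algebra.FiniteType B A] (hBA : Function.Injective (algebraMap B A))
    [Field K] [IsAlgClosed K] [Algebra B K] (hBK : Function.Injective (algebraMap B K))
    (hdom : IsDomain (K ⊗[B] A)) [Field κ] :
    ∃ a : B, a ≠ 0 ∧ ∀ (_ : Algebra B κ), algebraMap B κ a ≠ 0 → IsDomain (κ ⊗[B] A) := by
  obtain ⟨t, ht, φ, g, h, hker, hg0, hh0, hh⟩ := aux_hyper hBA
  have : Module.Flat B K := aux_flat hBK
  have hgp := aux_gprime hBK hdom φ g hg0 hker
  obtain ⟨a1, ha1, H1⟩ := aux_bertini (κ := κ) hBK g hgp.irreducible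
  obtain ⟨a2, ha2, H2⟩ := aux_reg (B := B) (κ := κ) (φ h) (fun x hx =>
    (mul_eq_zero.mp hx).resolve_left hh0)
  obtain ⟨a3, ha3, H3⟩ := aux_nontriv (κ := κ) hBA
  refine ⟨a1 * a2 * a3, mul_ne_zero (mul_ne_zero ha1 ha2) ha3, fun inst ha => ?_⟩
  rw [map_mul, map_mul] at ha
  have h3 := right_ne_zero_of_mul ha
  have h1 := left_ne_zero_of_mul (left_ne_zero_of_mul ha)
  have h2 := right_ne_zero_of_mul (left_ne_zero_of_mul ha)
  exact aux_dom φ g h hker (H1 _ h1).prime hh (H2 inst h2) (H3 inst h3)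

end Helpers

/-- **Integrality of the fibres on a Zariski open set.**
Let `k` be an algebraically closed field of characteristic zero, `B` a finitely generated
`k`-algebra that is an integral domain, `K` the algebraic closure of `Frac(B)`, and
`f ∈ B[x]` a monic polynomial.  Let `R` be a finitely generated `B[x]_f`-algebra containing
`B[x]_f` that is flat as a `B[x]_f`-module and such that `R ⊗_{B[x]_f} K(x)` is an integral
domain, the tensor product being formed along the inclusion `τ : B[x]_f ⊆ K(x)`.  Then there
exists a nonzero `a ∈ B` such that for every `k`-algebra homomorphism `c : B → k` with
`c a ≠ 0`, the ring `R ⊗_{B[x]_f} k(x)` is an integral domain, where the tensor product is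
formed along the extension `σ : B[x]_f → k(x)` of `c` determined by `c(x) = x`. -/
theorem fibre_isDomain_on_zariski_open
    (k : Type*) [Field k] [IsAlgClosed k] [CharZero k]
    (B : Type*) [CommRing B] [IsDomain B] [Algebra k B] [Algebra.FiniteType k B]
    (K : Type*) [Field K] [IsAlgClosed K] [CharZero K]
    [Algebra B K] [Algebra.IsAlgebraic B K]
    (hBK : Function.Injective (algebraMap B K))
    [Algebra k K] [IsScalarTower k B K]
    (f : Polynomial B) (hf : f.Monic)
    (R : Type*) [CommRing R] [Algebra (Localization.Away f) R]
    (hRinj : Function.Injective (algebraMap (Localization.Away f) R))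
    [Algebra.FiniteType (Localization.Away f) R]
    [Module.Flat (Localization.Away f) R]
    (τ : Localization.Away f →+* RatFunc K)
    (hτ : τ.comp (algebraMap (Polynomial B) (Localization.Away f)) =
      (algebraMap (Polynomial K) (RatFunc K)).comp
        (Polynomial.mapRingHom (algebraMap B K)))
    (hdom :
      letI : Algebra (Localization.Away f) (RatFunc K) := τ.toAlgebra
      IsDomain (TensorProduct (Localization.Away f) R (RatFunc K))) :
    ∃ a : B, a ≠ 0 ∧ ∀ c : B →ₐ[k] k, c a ≠ 0 →
      ∀ σ : Localization.Away f →+* RatFunc k,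
        σ.comp (algebraMap (Polynomial B) (Localization.Away f)) =
          (algebraMap (Polynomial k) (RatFunc k)).comp
            (Polynomial.mapRingHom (c : B →+* k)) →
        letI : Algebra (Localization.Away f) (RatFunc k) := σ.toAlgebra
        IsDomain (TensorProduct (Localization.Away f) R (RatFunc k)) := by
  let _ : Algebra B R := Algebra.compHom R (algebraMap B (Localization.Away f))
  have : IsScalarTower B (Localization.Away f) R := IsScalarTower.of_algebraMap_eq fun _ => rfl
  have : CharZero B := charZero_of_injective_algebraMap (algebraMap k B).injective
  have hfin : Algebra.FiniteType B (Localization.Away f) := by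
    have : Algebra.FiniteType (Polynomial B) (Localization.Away f) :=
      IsLocalization.finiteType_of_monoid_fg (Submonoid.powers f) _
    exact Algebra.FiniteType.trans (S := Polynomial B) inferInstance inferInstance
  have : Algebra.FiniteType B R :=
    Algebra.FiniteType.trans (S := Localization.Away f) inferInstance inferInstance
  have : Module.Flat B (Localization.Away f) := by
    have : Module.Flat (Polynomial B) (Localization.Away f) :=
      IsLocalization.flat _ (Submonoid.powers f)
    exact Module.Flat.trans B (Polynomial B) (Localization.Away f)
  have : Module.Flat B R := Module.Flat.trans B (Localization.Away f) R
  have hBR : Function.Injective (algebraMap B R) := by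
    have h1 : Function.Injective (algebraMap (Polynomial B) (Localization.Away f)) :=
      IsLocalization.injective _ (powers_le_nonZeroDivisors_of_noZeroDivisors hf.ne_zero)
    rw [IsScalarTower.algebraMap_eq B (Localization.Away f) R,
      IsScalarTower.algebraMap_eq B (Polynomial B) (Localization.Away f)]
    exact hRinj.comp (h1.comp Polynomial.C_injective)
  have hK : IsDomain (K ⊗[B] R) := by
    letI : Algebra (Localization.Away f) (RatFunc K) := τ.toAlgebra
    obtain ⟨Ψ, hΨ, -⟩ := aux_compare (κ := K) (R := R) f hτ
    have : IsDomain (TensorProduct (Localization.Away f) R (RatFunc K)) := hdom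
    exact hΨ.isDomain Ψ
  have hRK : Function.Injective (Algebra.TensorProduct.includeRight : R →ₐ[B] K ⊗[B] R) :=
    Algebra.TensorProduct.includeRight_injective hBK
  have : IsDomain R := hRK.isDomain (Algebra.TensorProduct.includeRight : R →ₐ[B] K ⊗[B] R).toRingHom
  obtain ⟨a, ha, H⟩ := aux_main (κ := k) hBR hBK hK
  refine ⟨a, ha, fun c hc σ hσ => ?_⟩
  letI : Algebra (Localization.Away f) (RatFunc k) := σ.toAlgebra
  letI instBk : Algebra B k := (c : B →+* k).toAlgebra
  have hD := H instBk hc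
  obtain ⟨Ψ, hΨ, h⟩ := aux_compare (κ := k) (R := R) f hσ
  exact aux_transfer Ψ hΨ h
end

section
/- Let F'/F be an extension of differential fields of characteristic zero (the derivation of F' restricts to the derivation of F) such that F' is algebraic over F, and let f₁,…,fₛ ∈ F. Then f₁,…,fₛ are logarithmically independent over F if and only if f₁,…,fₛ are logarithmically independent over F'. -/
/-- A derivation (as a bare function): additive and satisfying the Leibniz rule. -/
def IsDerivationFun {R : Type*} [CommRing R] (δ : R → R) : Prop :=
  (∀ a b : R, δ (a + b) = δ a + δ b) ∧ (∀ a b : R, δ (a * b) = a * δ b + δ a * b)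

/-- Elements `f 0, …, f (s-1)` of a differential field `(F, δ)` are logarithmically
independent over `F` if the only integers `d 0, …, d (s-1)` for which there exists
`a ∈ F, a ≠ 0` with `∑ i, d i • f i = δ a / a` are `d 0 = ⋯ = d (s-1) = 0`. -/
def LogIndep {F : Type*} [Field F] (δ : F → F) {s : ℕ} (f : Fin s → F) : Prop :=
  ∀ (d : Fin s → ℤ) (a : F), a ≠ 0 → (∑ i, (d i : F) * f i) = δ a / a → ∀ i, d i = 0

open Polynomial in
/-- If `a` is algebraic over `F` with `a' = g a`, `g ∈ F`, then the constant coefficient `c`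
of the minimal polynomial satisfies `c' = n g c`. -/
theorem exists_base_of_algebraic {F F' : Type*} [Field F] [Field F']
    [Algebra F F'] [Algebra.IsAlgebraic F F'] [Differential F] [Differential F']
    [DifferentialAlgebra F F'] (g : F) (a : F') (ha : a ≠ 0)
    (h : Differential.deriv a = algebraMap F F' g * a) :
    ∃ (n : ℕ) (c : F), n ≠ 0 ∧ c ≠ 0 ∧ Differential.deriv c = n * g * c := by
  have hint : IsIntegral F a := Algebra.IsIntegral.isIntegral a
  set p := minpoly F a with hp
  have hmon : p.Monic := minpoly.monic hint
  have hpos : 0 < p.natDegree := minpoly.natDegree_pos hint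
  refine ⟨p.natDegree, p.coeff 0, hpos.ne', minpoly.coeff_zero_ne_zero hint ha, ?_⟩
  let q : F[X] := Differential.mapCoeffs p + C g * (X * derivative p)
    - C (p.natDegree * g) * p
  have hcoeff : ∀ i, q.coeff i = Differential.deriv (p.coeff i) + g * (i * p.coeff i)
      - p.natDegree * g * p.coeff i := by
    intro i
    have hX : (X * derivative p).coeff i = i * p.coeff i := by
      cases i with
      | zero => simp
      | succ k => rw [coeff_X_mul, coeff_derivative]; push_cast; ring
    simp only [q, coeff_sub, coeff_add, coeff_C_mul, hX, Differential.coeff_mapCoeffs]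
  have haq : aeval a q = 0 := by
    have h1 := Differential.deriv_aeval_eq (A := F) a p
    have h0 : aeval a p = 0 := minpoly.aeval F a
    rw [h0, map_zero, h] at h1
    simp only [q, map_sub, map_add, map_mul, aeval_C, aeval_X, h0]
    linear_combination -h1
  have hdeg : q.degree < p.degree := by
    rw [degree_eq_natDegree hmon.ne_zero, degree_lt_iff_coeff_zero]
    intro m hm
    rw [hcoeff]
    rcases hm.eq_or_lt with rfl | hlt
    · rw [hmon.coeff_natDegree]; simp [mul_comm]
    · rw [coeff_eq_zero_of_natDegree_lt hlt]; simp
  have hq : q = 0 := eq_zero_of_dvd_of_degree_lt (minpoly.dvd F a haq) hdeg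
  have h2 := hcoeff 0
  rw [hq] at h2
  simp only [coeff_zero, Nat.cast_zero] at h2
  linear_combination -h2

/-- Bundle a derivation function as a `Differential` structure. -/
@[reducible]
def IsDerivationFun.toDifferential {R : Type*} [CommRing R] {δ : R → R}
    (h : IsDerivationFun δ) : Differential R :=
  ⟨Derivation.mk' (AddMonoidHom.mk' δ h.1).toIntLinearMap (by
    intro a b
    simp [h.2, mul_comm b])⟩

/-- **Logarithmic independence is preserved by algebraic extensions.**
Let `F'/F` be an extension of differential fields of characteristic zero (so the derivation of
`F'` restricts to the derivation of `F`) such that `F'` is algebraic over `F`, and let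
`f 0, …, f (s-1) ∈ F`.  Then `f 0, …, f (s-1)` are logarithmically independent over `F` if and
only if they are logarithmically independent over `F'`. -/
theorem logIndep_iff_of_algebraic
    (F F' : Type*) [Field F] [Field F'] [CharZero F] [CharZero F']
    [Algebra F F'] [Algebra.IsAlgebraic F F']
    (δ : F → F) (δ' : F' → F')
    (hδ : IsDerivationFun δ) (hδ' : IsDerivationFun δ')
    (hres : ∀ a : F, δ' (algebraMap F F' a) = algebraMap F F' (δ a))
    {s : ℕ} (f : Fin s → F) :
    LogIndep δ f ↔ LogIndep δ' (fun i => algebraMap F F' (f i)) := by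
  constructor
  · intro hF d a ha hd
    letI := hδ.toDifferential
    letI := hδ'.toDifferential
    haveI : DifferentialAlgebra F F' := ⟨hres⟩
    have h : Differential.deriv a = algebraMap F F' (∑ i, (d i : F) * f i) * a := by
      rw [eq_div_iff ha] at hd
      change δ' a = _
      rw [← hd]
      simp
    obtain ⟨n, c, hn, hc, hnc⟩ := exists_base_of_algebraic _ a ha h
    have key := hF (fun i => n * d i) c hc (by
      rw [eq_div_iff hc]
      change δ c = _ at hnc
      rw [hnc]
      simp [Finset.mul_sum, mul_assoc])
    intro i
    have := key i
    simpa [hn] using this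
  · intro hF' d a ha hd
    refine hF' d (algebraMap F F' a) (by simpa using ha) ?_
    rw [hres, ← map_div₀, ← hd]
    simp
end

section
/- Let k be an algebraically closed field of characteristic zero and equip k(x) with the derivation d/dx. Let H be a finitely generated commutative Hopf algebra over k, and let R be a nonzero k(x)-algebra equipped with a derivation δ extending d/dx. Suppose ρ : R → R ⊗_k H is a k(x)-algebra homomorphism satisfying: (i) the comodule axioms (ρ ⊗ id_H)∘ρ = (id_R ⊗ Δ)∘ρ and (id_R ⊗ ε)∘ρ = id_R, where Δ and ε are the comultiplication and counit of H; (ii) compatibility with the derivation, ρ(δ(r)) = (δ ⊗ id_H)(ρ(r)) for all r ∈ R (elements of H are treated as constants); and (iii) the torsor condition that the map R ⊗_{k(x)} R → R ⊗_k H sending a ⊗ b to (a ⊗ 1)·ρ(b) is bijective. Then the intersection of all maximal differential ideals of R is the zero ideal. -/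
open scoped TensorProduct

/-- An ideal `I` of a ring with a derivation `δ` is a maximal differential ideal if it is a
proper ideal stable under `δ` and is not properly contained in any proper `δ`-stable ideal. -/
def IsMaxDiffIdeal {R : Type*} [CommRing R] (δ : R → R) (I : Ideal R) : Prop :=
  I ≠ ⊤ ∧ (∀ a ∈ I, δ a ∈ I) ∧
    ∀ J : Ideal R, (∀ a ∈ J, δ a ∈ J) → I ≤ J → J ≠ ⊤ → J = I

namespace DiffTorsor

/-- The action of a functional on a comodule. -/
noncomputable def act {k R H : Type*} [Field k] [CommRing H] [Algebra k H]
    [AddCommGroup R] [Module k R] (ρ : R →ₗ[k] R ⊗[k] H) (g : H →ₗ[k] k) : R →ₗ[k] R :=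
  (TensorProduct.rid k R).toLinearMap ∘ₗ g.lTensor R ∘ₗ ρ

section comodule
variable {k R H : Type*} [Field k] [CommRing H] [HopfAlgebra k H]
    [AddCommGroup R] [Module k R] (ρ : R →ₗ[k] R ⊗[k] H)

theorem act_act
    (hcoassoc : ∀ r : R,
      (TensorProduct.assoc k R H H)
          ((TensorProduct.map ρ (LinearMap.id : H →ₗ[k] H)) (ρ r)) =
        (TensorProduct.map (LinearMap.id : R →ₗ[k] R) Coalgebra.comul) (ρ r))
    (f g : H →ₗ[k] k) (r : R) :
    act ρ f (act ρ g r) =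
      act ρ ((TensorProduct.lid k k).toLinearMap ∘ₗ TensorProduct.map f g ∘ₗ Coalgebra.comul) r := by
  have key : ∀ z : R ⊗[k] H, act ρ f (TensorProduct.rid k R (g.lTensor R z)) =
      TensorProduct.rid k R ((((TensorProduct.lid k k).toLinearMap ∘ₗ TensorProduct.map f g)).lTensor R
        (TensorProduct.assoc k R H H ((TensorProduct.map ρ (LinearMap.id : H →ₗ[k] H)) z))) := by
    intro z
    induction z with
    | zero => simp
    | add x y hx hy => simp only [map_add, hx, hy]
    | tmul x h =>
      simp only [LinearMap.lTensor_tmul, TensorProduct.rid_tmul, map_smul, TensorProduct.map_tmul,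
        LinearMap.id_coe, id_eq, act, LinearMap.comp_apply]
      generalize ρ x = w
      induction w with
      | zero => simp
      | add x y hx hy => simp only [map_add, hx, hy, smul_add, TensorProduct.add_tmul]
      | tmul y h' => simp [smul_smul, mul_comm]
  have := key (ρ r)
  rw [hcoassoc] at this
  simp only [act, LinearMap.comp_apply] at this ⊢
  refine Eq.trans this ?_
  rw [LinearEquiv.coe_coe]
  congr 1
  generalize ρ r = w
  induction w with
  | zero => simp
  | add x y hx hy => simp only [map_add, hx, hy]
  | tmul y h' => simp


theorem act_bijective
    (hcoassoc : ∀ r : R,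
      (TensorProduct.assoc k R H H)
          ((TensorProduct.map ρ (LinearMap.id : H →ₗ[k] H)) (ρ r)) =
        (TensorProduct.map (LinearMap.id : R →ₗ[k] R) Coalgebra.comul) (ρ r))
    (hcounit : ∀ r : R,
      (TensorProduct.map (LinearMap.id : R →ₗ[k] R) (Coalgebra.counit (R := k) (A := H)))
          (ρ r) = r ⊗ₜ[k] (1 : k))
    (g : H →ₐ[k] k) : Function.Bijective (act ρ g.toLinearMap) := by
  have h1 : ∀ r, act ρ (Coalgebra.counit (R := k) (A := H)) r = r := by
    intro r
    have := hcounit r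
    simp only [act, LinearMap.comp_apply]
    change TensorProduct.rid k R (TensorProduct.map LinearMap.id _ _) = _
    rw [this]; simp
  have e1 : (TensorProduct.lid k k).toLinearMap ∘ₗ
      TensorProduct.map g.toLinearMap (g.toLinearMap ∘ₗ HopfAlgebra.antipode k) ∘ₗ Coalgebra.comul
      = (Coalgebra.counit : H →ₗ[k] k) := by
    ext h
    have := congrArg g (HopfAlgebra.mul_antipode_lTensor_comul_apply (R := k) h)
    rw [AlgHom.commutes] at this
    refine Eq.trans ?_ this
    simp only [LinearMap.comp_apply]
    generalize (Coalgebra.comul h : H ⊗[k] H) = w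
    induction w with
    | zero => simp
    | add x y hx hy => simp only [map_add, hx, hy]
    | tmul y h' => simp
  have e2 : (TensorProduct.lid k k).toLinearMap ∘ₗ
      TensorProduct.map (g.toLinearMap ∘ₗ HopfAlgebra.antipode k) g.toLinearMap ∘ₗ Coalgebra.comul
      = (Coalgebra.counit : H →ₗ[k] k) := by
    ext h
    have := congrArg g (HopfAlgebra.mul_antipode_rTensor_comul_apply (R := k) h)
    rw [AlgHom.commutes] at this
    refine Eq.trans ?_ this
    simp only [LinearMap.comp_apply]
    generalize (Coalgebra.comul h : H ⊗[k] H) = w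
    induction w with
    | zero => simp
    | add x y hx hy => simp only [map_add, hx, hy]
    | tmul y h' => simp
  refine Function.bijective_iff_has_inverse.2
    ⟨act ρ (g.toLinearMap ∘ₗ HopfAlgebra.antipode k), fun r => ?_, fun r => ?_⟩
  · rw [act_act ρ hcoassoc, e2, h1]
  · rw [act_act ρ hcoassoc, e1, h1]

end comodule

/-- multiplicativity of the action -/
theorem act_mul {k R H : Type*} [Field k] [CommRing H] [Algebra k H]
    [CommRing R] [Algebra k R] (ρ : R →ₗ[k] R ⊗[k] H) (g : H →ₐ[k] k)
    (hρ : ∀ a b, ρ (a * b) = ρ a * ρ b) (a b : R) :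
    act ρ g.toLinearMap (a * b) = act ρ g.toLinearMap a * act ρ g.toLinearMap b := by
  simp only [act, LinearMap.comp_apply, hρ]
  generalize ρ a = u
  generalize ρ b = v
  induction u with
  | zero => simp
  | add x y hx hy => simp only [map_add, hx, hy, add_mul]
  | tmul x h =>
    induction v with
    | zero => simp
    | add x y hx hy => simp only [map_add, hx, hy, mul_add]
    | tmul y h' => simp [smul_smul, mul_comm]

/-- Derivations preserve nilpotents in characteristic zero. -/
theorem nilp_deriv {k A : Type*} [Field k] [CharZero k] [CommRing A] [Algebra k A]
    (D : A →ₗ[k] A) (hD : ∀ a b, D (a * b) = a * D b + b * D a) (a : A) (ha : IsNilpotent a) :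
    IsNilpotent (D a) := by
  obtain ⟨n, hn⟩ := ha
  let D' : Derivation k A A := Derivation.mk' D (by intro a b; simp [hD])
  have hD' : ∀ x, D' x = D x := fun x => rfl
  have key : ∀ j, j ≤ n → a ^ (n - j) * (D a) ^ (2 * j) = 0 := by
    intro j
    induction j with
    | zero => intro _; simpa using hn
    | succ j ih =>
      intro hj
      have h0 := ih (by omega)
      obtain ⟨m, hm⟩ : ∃ m, n - j = m + 1 := ⟨n - j - 1, by omega⟩
      have hm' : n - (j + 1) = m := by omega
      rw [hm] at h0
      rw [hm']
      have h1 := congrArg (fun x => D' x * D a) h0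
      simp only [Derivation.leibniz, Derivation.leibniz_pow, map_zero, zero_mul, smul_eq_mul,
        Nat.add_sub_cancel, nsmul_eq_mul] at h1
      simp only [hD'] at h1
      have h2 : ((m + 1 : ℕ) : A) * (a ^ m * D a ^ (2 * (j + 1))) = 0 := by
        rcases j with _ | j
        · simp at h1 ⊢
          linear_combination h1
        · have e : 2 * (j + 1) - 1 = 2 * j + 1 := by omega
          rw [e] at h1
          have : D a ^ (2 * (j + 1)) = D a ^ (2 * j + 1) * D a := by ring
          rw [this] at h0
          linear_combination h1 - ((2 * (j + 1) : ℕ) : A) * D (D a) * h0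
      have hu : IsUnit ((m + 1 : ℕ) : A) := by
        have : ((m + 1 : ℕ) : A) = algebraMap k A ((m + 1 : ℕ) : k) := by simp
        rw [this]
        exact (IsUnit.mk0 _ (by exact_mod_cast Nat.succ_ne_zero m)).map _
      exact (hu.mul_right_eq_zero).1 h2
  exact ⟨2 * n, by simpa using key n le_rfl⟩

section cartier
variable {k H : Type*} [Field k] [CharZero k] [CommRing H] [HopfAlgebra k H]

/-- `a ↦ ∑ a₁ q(a₂)` -/
noncomputable def convol (q : H →ₗ[k] H) : H →ₗ[k] H :=
  LinearMap.mul' k H ∘ₗ q.lTensor H ∘ₗ Coalgebra.comul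

theorem conv_leibniz (q : H →ₗ[k] H)
    (hq : ∀ a b, q (a * b) = Coalgebra.counit (R := k) a • q b + Coalgebra.counit (R := k) b • q a)
    (a b : H) : convol q (a * b) = a * convol q b + b * convol q a := by
  have key : ∀ z w : H ⊗[k] H, LinearMap.mul' k H (q.lTensor H (z * w)) =
      TensorProduct.rid k H ((Coalgebra.counit (R := k)).lTensor H z) *
        LinearMap.mul' k H (q.lTensor H w) +
      TensorProduct.rid k H ((Coalgebra.counit (R := k)).lTensor H w) *
        LinearMap.mul' k H (q.lTensor H z) := by
    intro z w
    induction z with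
    | zero => simp
    | add x y hx hy => simp only [map_add, hx, hy, add_mul, mul_add]; ring
    | tmul x h =>
      induction w with
      | zero => simp
      | add x y hx hy => simp only [map_add, hx, hy, add_mul, mul_add]; ring
      | tmul y h' =>
        simp only [Algebra.TensorProduct.tmul_mul_tmul, LinearMap.lTensor_tmul, hq,
          LinearMap.mul'_apply, TensorProduct.rid_tmul, Algebra.smul_def]
        ring
  simp only [convol, LinearMap.comp_apply, Bialgebra.comul_mul, key]
  simp

/-- augmentation ideal -/
noncomputable def aug (k H : Type*) [Field k] [CommRing H] [HopfAlgebra k H] : Ideal H :=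
  RingHom.ker (Bialgebra.counitAlgHom k H)

theorem mem_aug {a : H} : a ∈ aug k H ↔ Coalgebra.counit (R := k) a = 0 := Iff.rfl

theorem sub_mem_aug (a : H) : a - Coalgebra.counit (R := k) a • (1 : H) ∈ aug k H := by
  rw [mem_aug]; simp

theorem nilp_mem_pow (n : ℕ) : ∀ a : H, IsNilpotent a → a ∈ aug k H ^ n := by
  let I := aug k H
  let W : Submodule k H := (I ^ 2).restrictScalars k
  obtain ⟨s, hs⟩ := W.mkQ.exists_rightInverse_of_surjective
    (LinearMap.range_eq_top.2 W.mkQ_surjective)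
  have hs' : ∀ v, W.mkQ (s v) = v := fun v => LinearMap.congr_fun hs v
  let ε : H →ₗ[k] k := Coalgebra.counit
  let r : H →ₗ[k] H := LinearMap.id - (LinearMap.toSpanSingleton k H 1) ∘ₗ ε
  have hr : ∀ a, r a = a - ε a • (1 : H) := fun a => rfl
  let p : H →ₗ[k] (H ⧸ W) := W.mkQ ∘ₗ r
  let j : (H ⧸ W) →ₗ[k] H := r ∘ₗ s
  have hrI : ∀ a, r a ∈ I := sub_mem_aug
  have hWI : ∀ a ∈ W, a ∈ I := fun a ha => Ideal.pow_le_self two_ne_zero ha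
  have hjI : ∀ v, j v ∈ I := fun v => hrI _
  have hp : ∀ a b, p (a * b) = ε a • p b + ε b • p a := by
    intro a b
    have : r (a * b) = r a * r b + ε a • r b + ε b • r a := by
      have : ε (a * b) = ε a * ε b := Bialgebra.counit_mul a b
      simp only [hr, this, Algebra.smul_def, map_mul]; ring
    have h2 : W.mkQ (r a * r b) = 0 := by
      rw [Submodule.mkQ_apply, Submodule.Quotient.mk_eq_zero]
      change r a * r b ∈ I ^ 2
      rw [pow_two]; exact Ideal.mul_mem_mul (hrI a) (hrI b)
    simp only [p, LinearMap.comp_apply, this, map_add, h2, map_smul, zero_add]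
  -- the Euler operator
  let q : H →ₗ[k] H := j ∘ₗ p
  have hq : ∀ a b, q (a * b) = ε a • q b + ε b • q a := by
    intro a b; simp only [q, LinearMap.comp_apply, hp, map_add, map_smul]
  have hqx : ∀ x ∈ I, q x - x ∈ I ^ 2 := by
    intro x hx
    have hx0 : ε x = 0 := hx
    have h1 : r x = x := by rw [hr, hx0]; simp
    have h2 : s (W.mkQ x) - x ∈ W := by
      rw [← Submodule.Quotient.mk_eq_zero, ← Submodule.mkQ_apply, map_sub, hs', sub_self]
    have h3 : s (W.mkQ x) ∈ I := by
      have := I.add_mem (hWI _ h2) hx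
      simpa using this
    have h4 : r (s (W.mkQ x)) = s (W.mkQ x) := by
      have : ε (s (W.mkQ x)) = 0 := h3
      rw [hr, this]; simp
    change r (s (W.mkQ (r x))) - x ∈ I ^ 2
    rw [h1, h4]; exact h2
  let E := convol q
  have hEl : ∀ a b, E (a * b) = a * E b + b * E a := conv_leibniz q hq
  have hEx : ∀ x ∈ I, E x - x ∈ I ^ 2 := by
    intro x hx
    have key : ∀ z : H ⊗[k] H, LinearMap.mul' k H (q.lTensor H z) -
        q (TensorProduct.lid k H (ε.rTensor H z)) ∈ I ^ 2 := by
      intro z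
      induction z with
      | zero => simp
      | add x y hx hy =>
        have := Ideal.add_mem _ hx hy
        simp only [map_add]
        convert this using 1; ring
      | tmul a b =>
        have : r a * q b ∈ I ^ 2 := by
          rw [pow_two]; exact Ideal.mul_mem_mul (hrI a) (hjI _)
        simp only [LinearMap.lTensor_tmul, LinearMap.mul'_apply, LinearMap.rTensor_tmul,
          TensorProduct.lid_tmul, map_smul]
        rw [hr, sub_mul, smul_mul_assoc, one_mul] at this
        exact this
    have h1 := key (Coalgebra.comul x)
    have h2 : TensorProduct.lid k H (ε.rTensor H (Coalgebra.comul x)) = x := by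
      simp [ε]
    rw [h2] at h1
    have := Ideal.add_mem _ h1 (hqx x hx)
    simpa [E, convol] using this
  have hE0 : ∀ a, E a ∈ I := by
    intro a
    have key : ∀ z : H ⊗[k] H, LinearMap.mul' k H (q.lTensor H z) ∈ I := by
      intro z
      induction z with
      | zero => simp
      | add x y hx hy => simpa only [map_add] using I.add_mem hx hy
      | tmul a b => exact I.mul_mem_left a (hjI _)
    exact key _
  have hEn : ∀ n : ℕ, ∀ a ∈ I ^ n, E a - (n : H) * a ∈ I ^ (n + 1) := by
    intro n
    induction n with
    | zero => intro a _; simpa using hE0 a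
    | succ n ih =>
      intro a ha
      rw [pow_succ'] at ha
      refine Submodule.mul_induction_on ha ?_ ?_
      · intro x hx y hy
        have h1 : x * (E y - n * y) ∈ I ^ (n + 1 + 1) := by
          rw [pow_succ' I (n+1)]; exact Ideal.mul_mem_mul hx (ih y hy)
        have h2 : y * (E x - x) ∈ I ^ (n + 1 + 1) := by
          rw [show n + 1 + 1 = n + 2 from rfl, pow_add]; exact Ideal.mul_mem_mul hy (hEx x hx)
        have := Ideal.add_mem _ h1 h2
        rw [hEl]
        convert this using 1
        push_cast; ring
      · intro x y hx hy
        have := Ideal.add_mem _ hx hy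
        rw [map_add]
        convert this using 1
        ring
  -- induction
  induction n with
  | zero => intro a _; simp
  | succ n ih =>
    intro a ha
    rcases Nat.eq_zero_or_pos n with rfl | hn
    · obtain ⟨m, hm⟩ := ha
      have : ε a = 0 := by
        have : IsNilpotent (Bialgebra.counitAlgHom k H a) := ⟨m, by rw [← map_pow, hm, map_zero]⟩
        exact this.eq_zero
      rw [zero_add, pow_one]; exact this
    have hEa : E a ∈ I ^ (n + 1) := by
      classical
      let b := Module.Basis.ofVectorSpace k (H ⧸ W)
      let t : H ⊗[k] (H ⧸ W) := p.lTensor H (Coalgebra.comul a)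
      have hEt : E a = LinearMap.mul' k H (j.lTensor H t) := by
        simp only [E, convol, t, q, LinearMap.lTensor_comp, LinearMap.comp_apply]
      have hc : ∀ i, TensorProduct.equivFinsuppOfBasisRight b t i ∈ I ^ n := by
        intro i
        apply ih
        let qi : H →ₗ[k] H := Algebra.linearMap k H ∘ₗ b.coord i ∘ₗ p
        have hqi : ∀ a b, qi (a * b) = ε a • qi b + ε b • qi a := by
          intro a b; simp only [qi, LinearMap.comp_apply, hp, map_add, map_smul]
        have := nilp_deriv (convol qi) (conv_leibniz qi hqi) a ha
        convert this using 1
        rw [TensorProduct.equivFinsuppOfBasisRight_apply]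
        simp only [t, convol, LinearMap.comp_apply]
        generalize (Coalgebra.comul a : H ⊗[k] H) = w
        induction w with
        | zero => simp
        | add x y hx hy => simp only [map_add, hx, hy]
        | tmul y h' => simp [qi, Algebra.smul_def, mul_comm]
      have ht := (TensorProduct.equivFinsuppOfBasisRight b).symm_apply_apply t
      rw [TensorProduct.equivFinsuppOfBasisRight_symm_apply] at ht
      rw [hEt, ← ht, Finsupp.sum, map_sum, map_sum]
      refine Ideal.sum_mem _ fun i _ => ?_
      simp only [LinearMap.lTensor_tmul, LinearMap.mul'_apply]
      rw [pow_succ]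
      exact Ideal.mul_mem_mul (hc i) (hjI _)
    have h1 := Ideal.sub_mem _ hEa (hEn n a (ih a ha))
    rw [sub_sub_cancel] at h1
    have hu : IsUnit (n : H) := by
      have : (n : H) = algebraMap k H (n : k) := by simp
      rw [this]
      exact (IsUnit.mk0 _ (by exact_mod_cast hn.ne')).map _
    exact (Ideal.unit_mul_mem_iff_mem _ hu).1 h1

theorem exists_point [IsAlgClosed k] [Algebra.FiniteType k H] (M : Ideal H) [hM : M.IsMaximal] :
    ∃ g : H →ₐ[k] k, ∀ h, g h = 0 ↔ h ∈ M := by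
  let := Ideal.Quotient.field M
  have : Algebra.FiniteType k (H ⧸ M) := inferInstance
  have : Module.Finite k (H ⧸ M) := finite_of_finite_type_of_isJacobsonRing k (H ⧸ M)
  have hb := IsAlgClosed.algebraMap_bijective_of_isIntegral (k := k) (K := H ⧸ M)
  let e : k ≃ₐ[k] (H ⧸ M) := AlgEquiv.ofBijective (Algebra.ofId k (H ⧸ M)) hb
  refine ⟨e.symm.toAlgHom.comp (Ideal.Quotient.mkₐ k M), fun h => ?_⟩
  rw [← Ideal.Quotient.eq_zero_iff_mem]
  change e.symm (Ideal.Quotient.mk M h) = 0 ↔ _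
  simp

/-- Cartier's theorem -/
theorem cartier [IsAlgClosed k] [Algebra.FiniteType k H] (a : H) (ha : IsNilpotent a) : a = 0 := by
  have : IsNoetherianRing H := Algebra.FiniteType.isNoetherianRing k H
  have step : ∀ a : H, IsNilpotent a → ∃ u : H, Coalgebra.counit (R := k) u ≠ 0 ∧ u * a = 0 := by
    intro a ha
    have : a ∈ (⨅ i : ℕ, aug k H ^ i • ⊤ : Submodule H H) := by
      rw [Submodule.mem_iInf]; intro i
      simpa using nilp_mem_pow i a ha
    rw [Ideal.mem_iInf_smul_pow_eq_bot_iff] at this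
    obtain ⟨⟨r, hr⟩, h⟩ := this
    refine ⟨1 - r, ?_, ?_⟩
    · rw [map_sub, mem_aug.1 hr]; simp
    · simp only [smul_eq_mul] at h
      rw [sub_mul, h]; simp
  by_contra hne
  let J : Ideal H := Ideal.span {a}|>.annihilator
  have hJ : J ≠ ⊤ := by
    intro h
    have : (1 : H) ∈ J := h ▸ Submodule.mem_top
    rw [Submodule.mem_annihilator_span_singleton] at this
    simp at this; exact hne this
  obtain ⟨M, hM, hJM⟩ := Ideal.exists_le_maximal J hJ
  obtain ⟨g, hg⟩ := exists_point (k := k) M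
  have hbij := act_bijective (Coalgebra.comul : H →ₗ[k] H ⊗[k] H)
    (fun r => Coalgebra.coassoc_apply r) (fun r => Coalgebra.lTensor_counit_comul r) g
  have hmul := act_mul (Coalgebra.comul : H →ₗ[k] H ⊗[k] H) g Bialgebra.comul_mul
  set τ := act (Coalgebra.comul : H →ₗ[k] H ⊗[k] H) g.toLinearMap with hτ
  have hτε : ∀ v, Coalgebra.counit (R := k) (τ v) = g v := by
    intro v
    have h1 := congrArg (fun z => g (TensorProduct.lid k H z)) (Coalgebra.rTensor_counit_comul (R := k) v)
    simp only [TensorProduct.lid_tmul, one_smul] at h1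
    rw [← h1, hτ]
    simp only [act, LinearMap.comp_apply]
    generalize (Coalgebra.comul v : H ⊗[k] H) = w
    induction w with
    | zero => simp
    | add x y hx hy => simp only [map_add, hx, hy]
    | tmul y h' => simp [mul_comm]
  have hτn : IsNilpotent (τ a) := by
    obtain ⟨n, hn⟩ := ha
    have : ∀ m, τ (a ^ (m + 1)) = τ a ^ (m + 1) := by
      intro m
      induction m with
      | zero => simp
      | succ m ih => rw [pow_succ, hmul, ih, ← pow_succ]
    exact ⟨n + 1, by rw [← this, pow_succ, hn, zero_mul, map_zero]⟩
  obtain ⟨u, hu, hua⟩ := step _ hτn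
  obtain ⟨v, rfl⟩ := hbij.2 u
  rw [← hmul] at hua
  have hva : v * a = 0 := hbij.1 (by rw [hua, map_zero])
  apply hu
  rw [hτε, hg]
  apply hJM
  rw [Submodule.mem_annihilator_span_singleton]
  exact hva

theorem eq_zero_of_points [IsAlgClosed k] [Algebra.FiniteType k H] (h : H)
    (hh : ∀ g : H →ₐ[k] k, g h = 0) : h = 0 := by
  have : IsJacobsonRing H := isJacobsonRing_of_finiteType (A := k)
  apply cartier (k := k)
  rw [← mem_nilradical, nilradical, Ideal.radical_eq_jacobson, Ideal.jacobson, Ideal.mem_sInf]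
  rintro M ⟨-, hM⟩
  obtain ⟨g, hg⟩ := exists_point (k := k) M
  exact (hg h).1 (hh g)

end cartier

section final

theorem tensor_eq_zero {k H S : Type*} [Field k] [CharZero k] [IsAlgClosed k] [CommRing H]
    [HopfAlgebra k H] [Algebra.FiniteType k H] [AddCommGroup S] [Module k S] (z : S ⊗[k] H)
    (hz : ∀ g : H →ₐ[k] k, TensorProduct.rid k S (g.toLinearMap.lTensor S z) = 0) : z = 0 := by
  classical
  let b := Module.Basis.ofVectorSpace k S
  apply (TensorProduct.equivFinsuppOfBasisLeft b).injective
  rw [map_zero]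
  ext i
  apply eq_zero_of_points (k := k)
  intro g
  have key : g (TensorProduct.equivFinsuppOfBasisLeft b z i) =
      b.repr (TensorProduct.rid k S (g.toLinearMap.lTensor S z)) i := by
    clear hz
    induction z with
    | zero => simp
    | add x y hx hy => simp only [map_add, Finsupp.add_apply, hx, hy]
    | tmul y h' => simp [mul_comm]
  rw [key, hz]; simp

theorem exists_maxDiff {R : Type*} [CommRing R] [Nontrivial R] (D : R → R) (hD0 : D 0 = 0) :
    ∃ m : Ideal R, IsMaxDiffIdeal D m := by
  obtain ⟨m, -, hm⟩ := zorn_le_nonempty₀ {I : Ideal R | I ≠ ⊤ ∧ ∀ a ∈ I, D a ∈ I} (by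
    intro c hc hchain y hy
    refine ⟨sSup c, ⟨?_, ?_⟩, fun z hz => le_sSup hz⟩
    · intro h
      have h1 : (1 : R) ∈ sSup c := h ▸ Submodule.mem_top
      rw [Submodule.mem_sSup_of_directed ⟨y, hy⟩ hchain.directedOn] at h1
      obtain ⟨I, hI, h1⟩ := h1
      exact (hc hI).1 ((Ideal.eq_top_iff_one _).2 h1)
    · intro a ha
      rw [Submodule.mem_sSup_of_directed ⟨y, hy⟩ hchain.directedOn] at ha
      obtain ⟨I, hI, h1⟩ := ha
      exact (le_sSup hI : I ≤ sSup c) ((hc hI).2 a h1)) ⊥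
    ⟨bot_ne_top, by intro a ha; rw [Ideal.mem_bot] at ha ⊢; rw [ha, hD0]⟩
  refine ⟨m, hm.prop.1, hm.prop.2, fun J hJ hmJ hJt => ?_⟩
  exact le_antisymm (hm.le_of_ge ⟨hJt, hJ⟩ hmJ) hmJ

theorem comap_maxDiff {R : Type*} [CommRing R] (D : R → R) (e : R ≃+* R)
    (he : ∀ a, e (D a) = D (e a)) (m : Ideal R) (hm : IsMaxDiffIdeal D m) :
    IsMaxDiffIdeal D (m.comap e) := by
  obtain ⟨h1, h2, h3⟩ := hm
  refine ⟨Ideal.comap_ne_top _ h1, ?_, ?_⟩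
  · intro a ha
    rw [Ideal.mem_comap] at ha ⊢
    rw [he]; exact h2 _ ha
  · intro J hJ hmJ hJt
    have := h3 (J.comap e.symm) ?_ ?_ ?_
    · rw [← this]
      ext a; simp [Ideal.mem_comap]
    · intro a ha
      rw [Ideal.mem_comap] at ha ⊢
      have := hJ _ ha
      rwa [show e.symm (D a) = D (e.symm a) from e.injective (by simp [he])]
    · intro a ha
      rw [Ideal.mem_comap]
      apply hmJ
      rw [Ideal.mem_comap]
      simpa using ha
    · exact Ideal.comap_ne_top _ hJt

end final

theorem descend {k K R H : Type*} [Field k] [Field K] [CommRing H] [Algebra k H] [CommRing R]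
    [Algebra k K] [Algebra K R] [Algebra k R] [IsScalarTower k K R]
    (ρ : R →ₐ[K] R ⊗[k] H)
    (htorsor : Function.Bijective
      (Algebra.TensorProduct.productMap
        (Algebra.TensorProduct.includeLeft : R →ₐ[K] R ⊗[k] H) ρ))
    (m : Ideal R) (hm : m ≠ ⊤) (r : R)
    (hr : TensorProduct.map (Ideal.Quotient.mkₐ k m).toLinearMap (LinearMap.id : H →ₗ[k] H) (ρ r)
      = 0) : r = 0 := by
  have : Nontrivial (R ⧸ m) := Ideal.Quotient.nontrivial_iff.2 hm
  let Φ := AlgEquiv.ofBijective _ htorsor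
  let Ψ : R ⊗[k] H →ₐ[K] (R ⧸ m) ⊗[K] R :=
    (Algebra.TensorProduct.map (Ideal.Quotient.mkₐ K m) (AlgHom.id K R)).comp Φ.symm.toAlgHom
  have hk := Algebra.TensorProduct.rTensor_ker (R := k) (C := H) (Ideal.Quotient.mkₐ k m : R →ₐ[k] R ⧸ m)
    (Ideal.Quotient.mkₐ_surjective k m)
  have h1 : ρ r ∈ RingHom.ker (Algebra.TensorProduct.map (Ideal.Quotient.mkₐ k m) (AlgHom.id k H)) :=
    hr
  rw [hk] at h1
  have h2 : Ideal.map (Algebra.TensorProduct.includeLeft : R →ₐ[k] R ⊗[k] H)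
      (RingHom.ker (Ideal.Quotient.mkₐ k m)) ≤ RingHom.ker Ψ := by
    rw [Ideal.map_le_iff_le_comap]
    intro a ha
    replace ha : a ∈ m := Ideal.Quotient.eq_zero_iff_mem.1 ha
    rw [Ideal.mem_comap, RingHom.mem_ker]
    have : Φ.symm (a ⊗ₜ 1) = a ⊗ₜ 1 := by
      rw [AlgEquiv.symm_apply_eq]; simp [Φ]
    change Algebra.TensorProduct.map (Ideal.Quotient.mkₐ K m) (AlgHom.id K R) (Φ.symm (a ⊗ₜ 1)) = 0
    rw [this]
    simp [Ideal.Quotient.eq_zero_iff_mem.2 ha]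
  have h3 : Ψ (ρ r) = 0 := h2 h1
  have h4 : Φ.symm (ρ r) = 1 ⊗ₜ r := by
    rw [AlgEquiv.symm_apply_eq]; simp [Φ, ← Algebra.TensorProduct.one_def]
  change Algebra.TensorProduct.map (Ideal.Quotient.mkₐ K m) (AlgHom.id K R) (Φ.symm (ρ r)) = 0 at h3
  rw [h4] at h3
  simp only [Algebra.TensorProduct.map_tmul, map_one, AlgHom.id_apply] at h3
  have hinj := Algebra.TensorProduct.includeRight_injective (R := K) (A := R ⧸ m) (B := R)
    (algebraMap K (R ⧸ m)).injective
  apply hinj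
  simpa using h3

end DiffTorsor

/-- **In a differential torsor over `k(x)` the maximal differential ideals intersect in `0`.**
Let `k` be an algebraically closed field of characteristic zero and equip `k(x)` with the
derivation `d/dx` (the unique derivation `Dx` killing `k` with `Dx x = 1`).  Let `H` be a
finitely generated commutative Hopf algebra over `k` and let `R` be a nonzero `k(x)`-algebra
with a derivation `D` extending `d/dx` (`D` is `k`-linear automatically, and is here bundled
as a `k`-linear map).  Suppose `ρ : R → R ⊗_k H` is a `k(x)`-algebra homomorphism satisfying
(i) the comodule axioms, (ii) compatibility with the derivation `ρ ∘ D = (D ⊗ id) ∘ ρ`, and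
(iii) the torsor condition that `R ⊗_{k(x)} R → R ⊗_k H, a ⊗ b ↦ (a ⊗ 1)·ρ(b)` is bijective.
Then the intersection of all maximal differential ideals of `R` is the zero ideal. -/
theorem sInf_maxDiffIdeals_eq_bot_of_differential_torsor
    (k : Type*) [Field k] [IsAlgClosed k] [CharZero k]
    (H : Type*) [CommRing H] [HopfAlgebra k H] [Algebra.FiniteType k H]
    (R : Type*) [CommRing R] [Nontrivial R] [Algebra (RatFunc k) R]
    [Algebra k R] [IsScalarTower k (RatFunc k) R]
    -- the derivation `d/dx` on `k(x)`
    (Dx : RatFunc k → RatFunc k) (hDx : IsDerivationFun Dx)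
    (hDxC : ∀ a : k, Dx (RatFunc.C a) = 0) (hDxX : Dx RatFunc.X = 1)
    -- the derivation `D` of `R` extending `d/dx`
    (D : R →ₗ[k] R)
    (hLeib : ∀ a b : R, D (a * b) = a * D b + D a * b)
    (hext : ∀ q : RatFunc k, D (algebraMap (RatFunc k) R q) = algebraMap (RatFunc k) R (Dx q))
    -- the coaction `ρ`, a `k(x)`-algebra homomorphism, with its `k`-linear realization `ρₖ`
    (ρ : R →ₐ[RatFunc k] R ⊗[k] H)
    (ρₖ : R →ₗ[k] R ⊗[k] H) (hρₖ : ∀ r : R, ρₖ r = ρ r)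
    -- (i) comodule axioms
    (hcoassoc : ∀ r : R,
      (TensorProduct.assoc k R H H)
          ((TensorProduct.map ρₖ (LinearMap.id : H →ₗ[k] H)) (ρ r)) =
        (TensorProduct.map (LinearMap.id : R →ₗ[k] R) Coalgebra.comul) (ρ r))
    (hcounit : ∀ r : R,
      (TensorProduct.map (LinearMap.id : R →ₗ[k] R) (Coalgebra.counit (R := k) (A := H)))
          (ρ r) = r ⊗ₜ[k] (1 : k))
    -- (ii) compatibility with the derivation (`H` consists of constants)
    (hder : ∀ r : R, ρ (D r) = (TensorProduct.map D (LinearMap.id : H →ₗ[k] H)) (ρ r))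
    -- (iii) the torsor condition
    (htorsor : Function.Bijective
      (Algebra.TensorProduct.productMap
        (Algebra.TensorProduct.includeLeft : R →ₐ[RatFunc k] R ⊗[k] H) ρ)) :
    sInf {I : Ideal R | IsMaxDiffIdeal (⇑D) I} = ⊥ := by
  rw [eq_bot_iff]
  intro r hr
  rw [Ideal.mem_sInf] at hr
  rw [Ideal.mem_bot]
  obtain ⟨m, hm⟩ := DiffTorsor.exists_maxDiff (⇑D) (map_zero D)
  apply DiffTorsor.descend ρ htorsor m hm.1
  apply DiffTorsor.tensor_eq_zero
  intro g
  have hco' : ∀ r : R,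
      (TensorProduct.assoc k R H H)
          ((TensorProduct.map ρₖ (LinearMap.id : H →ₗ[k] H)) (ρₖ r)) =
        (TensorProduct.map (LinearMap.id : R →ₗ[k] R) Coalgebra.comul) (ρₖ r) := by
    intro r; rw [hρₖ]; exact hcoassoc r
  have hcu' : ∀ r : R,
      (TensorProduct.map (LinearMap.id : R →ₗ[k] R) (Coalgebra.counit (R := k) (A := H)))
          (ρₖ r) = r ⊗ₜ[k] (1 : k) := by
    intro r; rw [hρₖ]; exact hcounit r
  have hbij := DiffTorsor.act_bijective ρₖ hco' hcu' g
  have hmul := DiffTorsor.act_mul ρₖ g (by intro a b; simp only [hρₖ, map_mul])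
  let e : R ≃+* R :=
    { Equiv.ofBijective _ hbij with
      map_mul' := hmul
      map_add' := map_add _ }
  have hea : ∀ a, e a = DiffTorsor.act ρₖ g.toLinearMap a := fun a => rfl
  have he : ∀ a, e (D a) = D (e a) := by
    intro a
    simp only [hea, DiffTorsor.act, LinearMap.comp_apply, hρₖ, hder]
    generalize ρ a = w
    induction w with
    | zero => simp
    | add x y hx hy => simp only [map_add, hx, hy]
    | tmul y h' => simp
  have h1 := hr (DiffTorsor.comap_maxDiff (⇑D) e he m hm)
  rw [Ideal.mem_comap, ← Ideal.Quotient.eq_zero_iff_mem, hea] at h1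
  refine Eq.trans ?_ h1
  simp only [DiffTorsor.act, LinearMap.comp_apply, hρₖ]
  generalize ρ r = w
  induction w with
  | zero => simp
  | add x y hx hy => simp only [map_add, hx, hy]
  | tmul y h' =>
    simp only [TensorProduct.map_tmul, LinearMap.lTensor_tmul]
    change g h' • (Ideal.Quotient.mkₐ k m y) = Ideal.Quotient.mkₐ k m (g h' • y)
    rw [map_smul]
end

section
/- Let k be an algebraically closed field of characteristic zero, F a differential field with field of constants F^δ = k, and H a finitely generated commutative Hopf algebra over k. Let R be a differential F-algebra that is an integral domain and finitely generated as an F-algebra, equipped with a differential torsor structure: a k-algebra constant-compatible F-algebra homomorphism ρ : R → R ⊗_k H satisfying the comodule axioms ((ρ ⊗ id_H)∘ρ = (id_R ⊗ Δ)∘ρ, (id_R ⊗ ε)∘ρ = id_R), compatible with the derivation (ρ∘δ = (δ ⊗ id_H)∘ρ), and such that the map R ⊗_F R → R ⊗_k H, a ⊗ b ↦ (a ⊗ 1)·ρ(b), is bijective. For a k-algebra homomorphism g : H → k, let g·(−) denote the differential F-algebra automorphism (id_R ⊗ g)∘ρ of R. Then for any two maximal differential ideals 𝔪 and 𝔪'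 of R there exists a k-algebra homomorphism g : H → k such that 𝔪' = g·(𝔪) (the image of 𝔪 under this automorphism). -/
open scoped TensorProduct

open Polynomial in
/-- Chevalley: a transcendental element of a finite type algebra has many nonunit translates. -/
theorem aux_transc {k F S : Type*} [Field k] [Infinite k] [Field F] [Algebra k F] [CommRing S]
    [Algebra F S] [Algebra.FiniteType F S] (c : S) (hc : Transcendental F c) :
    ∃ a : k, ¬ IsUnit (c - algebraMap F S (algebraMap k F a)) := by
  have hinj : Function.Injective (aeval c : F[X] →ₐ[F] S) :=
    transcendental_iff_injective.mp hc
  set φ : F[X] →+* S := (aeval c : F[X] →ₐ[F] S).toRingHom with hφ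
  have hcomp : φ.comp (C : F →+* F[X]) = algebraMap F S := by
    ext x; simp [hφ]
  have hft : φ.FiniteType := by
    apply RingHom.FiniteType.of_comp_finiteType (f := (C : F →+* F[X]))
    rw [hcomp]
    exact RingHom.finiteType_algebraMap.mpr inferInstance
  have hfp := RingHom.FinitePresentation.of_finiteType.mp hft
  obtain ⟨T, hT⟩ := PrimeSpectrum.exists_constructibleSetData_iff.mpr
    (PrimeSpectrum.isConstructible_range_comap hfp)
  obtain ⟨P, hP, hP0⟩ := Ideal.exists_comap_eq_of_mem_minimalPrimes_of_injective
    (f := φ) hinj (⊥ : Ideal F[X]) (by simp [IsDomain.minimalPrimes_eq_singleton_bot])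
  have hmem : PrimeSpectrum.comap φ ⟨P, hP⟩ ∈ T.toSet := by
    rw [hT]; exact ⟨_, rfl⟩
  simp only [PrimeSpectrum.ConstructibleSetData.toSet, Set.mem_iUnion] at hmem
  obtain ⟨B, hB, hg, hf⟩ := hmem
  have hg0 : ∀ i, B.g i = 0 := by
    intro i
    have : B.g i ∈ P.comap φ := hg ⟨i, rfl⟩
    rwa [hP0] at this
  have hf0 : B.f ≠ 0 := by
    intro h
    apply hf
    simp [h]
  obtain ⟨a, ha⟩ : ∃ a : k, B.f.eval (algebraMap k F a) ≠ 0 := by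
    by_contra! h
    apply hf0
    refine Polynomial.eq_zero_of_infinite_isRoot _ (Set.Infinite.mono ?_
      (Set.infinite_range_of_injective (algebraMap k F).injective))
    rintro _ ⟨a, rfl⟩
    exact h a
  refine ⟨a, fun hu => ?_⟩
  have hprime : (Ideal.span {X - C (algebraMap k F a)}).IsPrime := by
    rw [Ideal.span_singleton_prime (X_sub_C_ne_zero _)]
    exact prime_X_sub_C _
  have hQ : (⟨_, hprime⟩ : PrimeSpectrum F[X]) ∈ T.toSet := by
    simp only [PrimeSpectrum.ConstructibleSetData.toSet, Set.mem_iUnion]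
    refine ⟨B, hB, ?_, ?_⟩
    · rintro _ ⟨i, rfl⟩
      simp [hg0]
    · intro h
      have : B.f ∈ Ideal.span {X - C (algebraMap k F a)} := h rfl
      rw [Ideal.mem_span_singleton, dvd_iff_isRoot] at this
      exact ha this
  rw [hT] at hQ
  obtain ⟨Q, hQ⟩ := hQ
  have h1 : X - C (algebraMap k F a) ∈ Q.asIdeal.comap φ := by
    have := congrArg PrimeSpectrum.asIdeal hQ
    simp only [PrimeSpectrum.comap_asIdeal] at this
    rw [this]
    exact Ideal.mem_span_singleton_self _
  have h2 : c - algebraMap F S (algebraMap k F a) ∈ Q.asIdeal := by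
    simpa [hφ] using h1
  exact Q.2.ne_top (Ideal.eq_top_of_isUnit_mem _ h2 hu)

open Polynomial in
/-- Constants of a differentially simple finite type algebra. -/
theorem aux_const {k F S : Type*} [Field k] [IsAlgClosed k] [Field F] [Algebra k F]
    (δF : F → F) (hδF : IsDerivationFun δF)
    (hconst : ∀ x : F, δF x = 0 ↔ x ∈ Set.range (algebraMap k F))
    [CommRing S] [Nontrivial S] [Algebra F S] [Algebra.FiniteType F S]
    (d : S →+ S) (hd : ∀ a b : S, d (a * b) = a * d b + d a * b)
    (hext : ∀ a : F, d (algebraMap F S a) = algebraMap F S (δF a))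
    (hsimple : ∀ J : Ideal S, (∀ a ∈ J, d a ∈ J) → J ≠ ⊤ → J = ⊥)
    (c : S) (hc : d c = 0) : ∃ a : k, c = algebraMap F S (algebraMap k F a) := by
  have : Infinite k := IsAlgClosed.instInfinite
  have hunit : ∀ x : S, d x = 0 → x ≠ 0 → IsUnit x := by
    intro x hx hx0
    by_contra hu
    have := hsimple (Ideal.span {x}) (by
      intro a ha
      rw [Ideal.mem_span_singleton] at ha ⊢
      obtain ⟨b, rfl⟩ := ha
      rw [hd, hx]; simp) (by rwa [Ne, Ideal.span_singleton_eq_top])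
    rw [Ideal.span_singleton_eq_bot] at this
    exact hx0 this
  have hk : ∀ a : k, d (algebraMap F S (algebraMap k F a)) = 0 := by
    intro a
    rw [hext, (hconst _).2 ⟨a, rfl⟩, map_zero]
  by_contra! hne
  have hu : ∀ a : k, IsUnit (c - algebraMap F S (algebraMap k F a)) := by
    intro a
    refine hunit _ (by rw [map_sub, hc, hk, sub_zero]) (sub_ne_zero.2 (hne a))
  by_cases halg : IsAlgebraic F c
  swap
  · obtain ⟨a, ha⟩ := aux_transc (k := k) c halg
    exact ha (hu a)
  have hint : IsIntegral F c := halg.isIntegral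
  set p := minpoly F c with hp
  have hmon : p.Monic := minpoly.monic hint
  have hpow : ∀ n : ℕ, d (c ^ n) = 0 := by
    intro n
    induction n with
    | zero =>
      have := hd 1 1
      simpa using this
    | succ n ih => rw [pow_succ, hd, ih, hc]; simp
  have h1F : δF 1 = 0 := by
    have := hδF.2 1 1
    simpa using this
  have hcoef : ∀ i, δF (p.coeff i) = 0 := by
    set q : F[X] := ∑ i ∈ Finset.range p.natDegree, monomial i (δF (p.coeff i)) with hq
    have hqd : q.degree < p.degree := by
      rw [degree_eq_natDegree hmon.ne_zero]
      apply lt_of_le_of_lt (degree_sum_le _ _)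
      rw [Finset.sup_lt_iff (WithBot.bot_lt_coe _)]
      intro i hi
      exact lt_of_le_of_lt (degree_monomial_le _ _) (by simpa using hi)
    have hq0 : aeval c q = 0 := by
      have h0 : d (aeval c p) = 0 := by rw [minpoly.aeval, map_zero]
      rw [aeval_eq_sum_range, Finset.sum_range_succ, map_add, map_sum] at h0
      rw [hq, map_sum, ← h0]
      rw [hmon.coeff_natDegree, one_smul, hpow, add_zero]
      refine Finset.sum_congr rfl fun i _ => ?_
      rw [Algebra.smul_def, hd, hpow, hext, aeval_monomial]
      simp
    have hqz : q = 0 := by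
      by_contra hne
      exact absurd (minpoly.degree_le_of_ne_zero F c hne hq0) (not_le.2 hqd)
    intro i
    rcases lt_trichotomy i p.natDegree with h | h | h
    · have : q.coeff i = 0 := by rw [hqz, coeff_zero]
      rw [hq, finsetSum_coeff] at this
      simp only [coeff_monomial] at this
      rw [Finset.sum_ite_eq' ] at this
      simpa [h] using this
    · rw [h, hmon.coeff_natDegree, h1F]
    · rw [coeff_eq_zero_of_natDegree_lt h]
      have := hδF.1 0 0
      simpa using this
  have hlift : p ∈ lifts (algebraMap k F) := by
    rw [lifts_iff_coeff_lifts]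
    intro i
    exact (hconst _).1 (hcoef i)
  obtain ⟨p0, hp0⟩ := hlift
  have hp0d : p0.degree ≠ 0 := by
    intro h
    have h2 : p.degree = 0 := by
      rw [← hp0, ← h]
      exact degree_map _ _
    exact (minpoly.degree_pos hint).ne' h2
  obtain ⟨a, ha⟩ := IsAlgClosed.exists_root p0 hp0d
  have hroot : p.IsRoot (algebraMap k F a) := by
    rw [← hp0]
    exact ha.map
  obtain ⟨q, hq⟩ := dvd_iff_isRoot.2 hroot
  have hqc : aeval c q = 0 := by
    have : aeval c p = 0 := minpoly.aeval _ _
    rw [hq, map_mul] at this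
    have h3 : aeval c (X - C (algebraMap k F a)) = c - algebraMap F S (algebraMap k F a) := by simp
    rw [h3] at this
    exact (hu a).mul_right_eq_zero.1 this
  have hqn : q ≠ 0 := by
    rintro rfl
    exact hmon.ne_zero (by rw [hq, mul_zero])
  have h4 := minpoly.degree_le_of_ne_zero F c hqn hqc
  have h5 : p.degree = 1 + q.degree := by rw [hq, degree_mul, degree_X_sub_C]
  rw [← hp, h5, degree_eq_natDegree hqn] at h4
  norm_cast at h4
  omega

/-- Zorn: a proper differential ideal lies in a maximal one. -/
theorem aux_zorn {T : Type*} [CommRing T] (d : T → T) (J₀ : Ideal T) (h1 : J₀ ≠ ⊤)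
    (h2 : ∀ a ∈ J₀, d a ∈ J₀) : ∃ J : Ideal T, J₀ ≤ J ∧ IsMaxDiffIdeal d J := by
  obtain ⟨J, hJ, hmax⟩ := zorn_le_nonempty₀ {J : Ideal T | J ≠ ⊤ ∧ ∀ a ∈ J, d a ∈ J} (by
    intro c hc hchain y hy
    refine ⟨sSup c, ⟨?_, ?_⟩, fun z hz => le_sSup hz⟩
    · rw [Ne, Ideal.eq_top_iff_one, Submodule.mem_sSup_of_directed ⟨y, hy⟩ hchain.directedOn]
      rintro ⟨I, hI, h⟩
      exact (hc hI).1 ((Ideal.eq_top_iff_one _).2 h)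
    · intro a ha
      rw [Submodule.mem_sSup_of_directed ⟨y, hy⟩ hchain.directedOn] at ha ⊢
      obtain ⟨I, hI, h⟩ := ha
      exact ⟨I, hI, (hc hI).2 a h⟩) J₀ ⟨h1, h2⟩
  refine ⟨J, hJ, hmax.prop.1, hmax.prop.2, fun K hK hle hne => ?_⟩
  exact le_antisymm (hmax.le_of_ge ⟨hne, hK⟩ hle) hle

/-- Constants modulo a maximal differential ideal. -/
theorem aux_quot {k F T : Type*} [Field k] [IsAlgClosed k] [Field F] [Algebra k F]
    (δF : F → F) (hδF : IsDerivationFun δF)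
    (hconst : ∀ x : F, δF x = 0 ↔ x ∈ Set.range (algebraMap k F))
    [CommRing T] [Algebra F T] [Algebra.FiniteType F T]
    (d : T →+ T) (hd : ∀ a b : T, d (a * b) = a * d b + d a * b)
    (hext : ∀ a : F, d (algebraMap F T a) = algebraMap F T (δF a))
    (J : Ideal T) (hJ : IsMaxDiffIdeal d J)
    (c : T) (hc : d c = 0) : ∃ a : k, c - algebraMap F T (algebraMap k F a) ∈ J := by
  have : Nontrivial (T ⧸ J) := Ideal.Quotient.nontrivial_iff.2 hJ.1
  let d' : T ⧸ J →+ T ⧸ J :=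
    QuotientAddGroup.map J.toAddSubgroup J.toAddSubgroup d (fun x hx => hJ.2.1 x hx)
  have hd' : ∀ x : T, d' (Ideal.Quotient.mk J x) = Ideal.Quotient.mk J (d x) := fun x => rfl
  have : Algebra.FiniteType F (T ⧸ J) := inferInstance
  obtain ⟨a, ha⟩ := aux_const (k := k) (F := F) (S := T ⧸ J) δF hδF hconst d'
    (by
      intro a b
      obtain ⟨a, rfl⟩ := Ideal.Quotient.mk_surjective a
      obtain ⟨b, rfl⟩ := Ideal.Quotient.mk_surjective b
      rw [← map_mul, hd', hd', hd', hd, map_add, map_mul, map_mul])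
    (by
      intro a
      exact (hd' _).trans (congrArg _ (hext a)))
    (by
      intro I hI hne
      have h := hJ.2.2 (I.comap (Ideal.Quotient.mk J)) (by
        intro x hx
        exact hI _ hx) (by
        intro x hx
        rw [Ideal.mem_comap, Ideal.Quotient.eq_zero_iff_mem.2 hx]
        exact I.zero_mem) (by
        intro h
        exact hne (Ideal.comap_eq_top_iff.1 h))
      rw [eq_bot_iff]
      intro x hx
      obtain ⟨x, rfl⟩ := Ideal.Quotient.mk_surjective x
      have : x ∈ I.comap (Ideal.Quotient.mk J) := hx
      rw [h] at this
      exact Ideal.Quotient.eq_zero_iff_mem.2 this)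
    (Ideal.Quotient.mk J c) (by rw [hd', hc, map_zero])
  refine ⟨a, ?_⟩
  rw [← Ideal.Quotient.eq_zero_iff_mem, map_sub, ha]
  exact sub_self _

theorem aux_map_stable {R T : Type*} [CommRing R] [CommRing T] (D : R → R) (d : T →+ T)
    (hd : ∀ a b : T, d (a * b) = a * d b + d a * b) (f : R →+* T)
    (hf : ∀ r, d (f r) = f (D r)) (I : Ideal R) (hI : ∀ a ∈ I, D a ∈ I) :
    ∀ a ∈ I.map f, d a ∈ I.map f := by
  intro a ha
  induction ha using Submodule.span_induction with
  | mem x hx =>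
    obtain ⟨r, hr, rfl⟩ := hx
    rw [hf]
    exact Ideal.mem_map_of_mem f (hI r hr)
  | zero => rw [map_zero]; exact Ideal.zero_mem _
  | add x y _ _ h1 h2 => rw [map_add]; exact Ideal.add_mem _ h1 h2
  | smul t x hx h =>
    rw [smul_eq_mul, hd]
    exact Ideal.add_mem _ (Ideal.mul_mem_left _ _ h) (Ideal.mul_mem_left _ _ hx)

theorem aux_comap {R T : Type*} [CommRing R] [CommRing T] (D : R → R) (d : T → T)
    (f : R →+* T) (hf : ∀ r, d (f r) = f (D r)) (I : Ideal R) (hI : IsMaxDiffIdeal D I)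
    (J : Ideal T) (hJ : IsMaxDiffIdeal d J) (hle : I.map f ≤ J) : J.comap f = I := by
  refine hI.2.2 _ ?_ (Ideal.map_le_iff_le_comap.1 hle) ?_
  · intro a ha
    rw [Ideal.mem_comap, ← hf]
    exact hJ.2.1 _ ha
  · intro h
    exact hJ.1 (Ideal.comap_eq_top_iff.1 h)

theorem aux_key
    (k : Type*) [Field k] [IsAlgClosed k]
    (F : Type*) [Field F] [Algebra k F]
    (δF : F → F) (hδF : IsDerivationFun δF)
    (hconst : ∀ x : F, δF x = 0 ↔ x ∈ Set.range (algebraMap k F))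
    (H : Type*) [CommRing H] [Algebra k H] [Algebra.FiniteType k H]
    (R : Type*) [CommRing R] [Algebra F R] [Algebra.FiniteType F R]
    [Algebra k R] [IsScalarTower k F R]
    (D : R →ₗ[k] R)
    (hLeib : ∀ a b : R, D (a * b) = a * D b + D a * b)
    (hext : ∀ a : F, D (algebraMap F R a) = algebraMap F R (δF a))
    (ρ : R →ₐ[F] R ⊗[k] H)
    (hder : ∀ r : R, ρ (D r) = (TensorProduct.map D (LinearMap.id : H →ₗ[k] H)) (ρ r))
    (htorsor : Function.Bijective
      (Algebra.TensorProduct.productMap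
        (Algebra.TensorProduct.includeLeft : R →ₐ[F] R ⊗[k] H) ρ))
    (m m' : Ideal R) (hm : IsMaxDiffIdeal (⇑D) m) (hm' : IsMaxDiffIdeal (⇑D) m') :
    ∃ g : H →ₐ[k] k, ∀ r : R, r ∈ m' ↔
      Algebra.TensorProduct.productMap (AlgHom.id k R) ((Algebra.ofId k R).comp g) (ρ r) ∈ m := by
  set d : R ⊗[k] H →ₗ[k] R ⊗[k] H := TensorProduct.map D (LinearMap.id : H →ₗ[k] H) with hdd
  have hd : ∀ a b : R ⊗[k] H, d (a * b) = a * d b + d a * b := by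
    intro a b
    induction a using TensorProduct.induction_on with
    | zero => simp
    | add x y hx hy => rw [add_mul, map_add, hx, hy, map_add]; ring
    | tmul r h =>
      induction b using TensorProduct.induction_on with
      | zero => simp
      | add x y hx hy => rw [mul_add, map_add, hx, hy, map_add]; ring
      | tmul r' h' =>
        simp [hdd, hLeib, TensorProduct.add_tmul]
  let inl : R →ₐ[F] R ⊗[k] H := Algebra.TensorProduct.includeLeft
  have hinl : ∀ r, d (inl r) = inl (D r) := by
    intro r
    simp [hdd, inl]
  let e := AlgEquiv.ofBijective _ htorsor
  have he1 : ∀ r, e (r ⊗ₜ 1) = inl r := by intro r; simp [e, inl]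
  have he2 : ∀ r, e (1 ⊗ₜ r) = ρ r := by
    intro r
    simp only [e, AlgEquiv.ofBijective_apply, Algebra.TensorProduct.productMap_apply_tmul, map_one,
      one_mul]
  have : Nontrivial (R ⧸ m) := Ideal.Quotient.nontrivial_iff.2 hm.1
  have : Nontrivial (R ⧸ m') := Ideal.Quotient.nontrivial_iff.2 hm'.1
  let χ : R ⊗[k] H →ₐ[F] (R ⧸ m) ⊗[F] (R ⧸ m') :=
    (Algebra.TensorProduct.map (Ideal.Quotient.mkₐ F m) (Ideal.Quotient.mkₐ F m')).comp
      e.symm.toAlgHom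
  set J₀ : Ideal (R ⊗[k] H) := m.map inl.toRingHom ⊔ m'.map ρ.toRingHom with hJ₀
  have hJ₀le : J₀ ≤ RingHom.ker χ.toRingHom := by
    rw [hJ₀, sup_le_iff, Ideal.map_le_iff_le_comap, Ideal.map_le_iff_le_comap]
    constructor
    · intro r hr
      change χ (inl r) = 0
      have h0 : Ideal.Quotient.mk m r = 0 := Ideal.Quotient.eq_zero_iff_mem.2 hr
      rw [← he1]
      simp [χ, h0]
    · intro r hr
      change χ (ρ r) = 0
      have h0 : Ideal.Quotient.mk m' r = 0 := Ideal.Quotient.eq_zero_iff_mem.2 hr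
      rw [← he2]
      simp [χ, h0]
  have hJ₀ne : J₀ ≠ ⊤ := by
    intro h
    rw [h] at hJ₀le
    exact RingHom.ker_ne_top χ.toRingHom (top_le_iff.1 hJ₀le)
  have hJ₀st : ∀ a ∈ J₀, d a ∈ J₀ := by
    intro a ha
    rw [hJ₀, Submodule.mem_sup] at ha
    obtain ⟨x, hx, y, hy, rfl⟩ := ha
    rw [map_add]
    refine Ideal.add_mem _ (Ideal.mem_sup_left ?_) (Ideal.mem_sup_right ?_)
    · exact aux_map_stable D d.toAddMonoidHom hd inl.toRingHom hinl m hm.2.1 x hx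
    · exact aux_map_stable D d.toAddMonoidHom hd ρ.toRingHom (fun r => (hder r).symm) m' hm'.2.1 y hy
  obtain ⟨J, hJle, hJ⟩ := aux_zorn d J₀ hJ₀ne hJ₀st
  have hc1 : J.comap inl.toRingHom = m :=
    aux_comap D d _ hinl m hm J hJ (le_sup_left.trans hJle)
  have hc2 : J.comap ρ.toRingHom = m' :=
    aux_comap D d _ (fun r => (hder r).symm) m' hm' J hJ (le_sup_right.trans hJle)
  have : Algebra.FiniteType F (R ⊗[k] H) :=
    Algebra.FiniteType.trans (S := R) inferInstance inferInstance
  have hex : ∀ h : H, ∃ a : k,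
      (1 : R) ⊗ₜ[k] h - algebraMap F (R ⊗[k] H) (algebraMap k F a) ∈ J := by
    intro h
    refine aux_quot δF hδF hconst d.toAddMonoidHom hd ?_ J hJ _ ?_
    · intro a
      change d (inl (algebraMap F R a)) = inl (algebraMap F R (δF a))
      rw [hinl, hext]
    · have h1 : D 1 = 0 := by
        have := hLeib 1 1
        simpa using this
      simp [hdd, h1]
  have hal : ∀ a : k, algebraMap F (R ⊗[k] H) (algebraMap k F a) = algebraMap k (R ⊗[k] H) a := by
    intro a
    rw [← IsScalarTower.algebraMap_apply]
  simp only [hal] at hex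
  choose g hg using hex
  have : Nontrivial (R ⊗[k] H ⧸ J) := Ideal.Quotient.nontrivial_iff.2 hJ.1
  let q := Ideal.Quotient.mkₐ k J
  have hq : ∀ h, algebraMap k (R ⊗[k] H ⧸ J) (g h) = q (1 ⊗ₜ h) := by
    intro h
    have := Ideal.Quotient.eq_zero_iff_mem.2 (hg h)
    rw [map_sub, sub_eq_zero] at this
    exact this.symm
  have hinj : Function.Injective (algebraMap k (R ⊗[k] H ⧸ J)) := RingHom.injective _
  let g' : H →ₐ[k] k :=
    { toFun := g
      map_one' := by
        apply hinj
        rw [hq, ← Algebra.TensorProduct.one_def, map_one, map_one]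
      map_zero' := by
        apply hinj
        rw [hq, TensorProduct.tmul_zero, map_zero, map_zero]
      map_mul' := by
        intro x y
        apply hinj
        rw [map_mul, hq, hq, hq, ← map_mul, Algebra.TensorProduct.tmul_mul_tmul, one_mul]
      map_add' := by
        intro x y
        apply hinj
        rw [map_add, hq, hq, hq, ← map_add, TensorProduct.tmul_add]
      commutes' := by
        intro a
        apply hinj
        rw [hq, Algebra.algebraMap_eq_smul_one, TensorProduct.tmul_smul,
          ← Algebra.TensorProduct.one_def, map_smul, map_one]
        simp [Algebra.algebraMap_eq_smul_one] }
  refine ⟨g', fun r => ?_⟩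
  have hmain : ∀ t : R ⊗[k] H, t - inl (Algebra.TensorProduct.productMap (AlgHom.id k R)
      ((Algebra.ofId k R).comp g') t) ∈ J := by
    intro t
    induction t using TensorProduct.induction_on with
    | zero => simp
    | add x y hx hy =>
      rw [map_add, map_add, add_sub_add_comm]
      exact Ideal.add_mem _ hx hy
    | tmul r h =>
      have h2 : (r ⊗ₜ[k] (1 : H)) * ((1 : R) ⊗ₜ[k] h - algebraMap k (R ⊗[k] H) (g h)) ∈ J :=
        Ideal.mul_mem_left _ _ (hg h)
      convert h2 using 1
      rw [mul_sub, Algebra.TensorProduct.tmul_mul_tmul, mul_one, one_mul]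
      congr 1
      change (r * algebraMap k R (g h)) ⊗ₜ[k] (1 : H) =
        (r ⊗ₜ[k] (1 : H)) * (algebraMap k R (g h) ⊗ₜ[k] (1 : H))
      rw [Algebra.TensorProduct.tmul_mul_tmul, one_mul]
  rw [← hc1, ← hc2]
  change ρ r ∈ J ↔ inl _ ∈ J
  have := hmain (ρ r)
  constructor
  · intro h
    simpa using Ideal.sub_mem _ h this
  · intro h
    simpa using Ideal.add_mem _ this h

theorem aux_surj
    (k : Type*) [Field k]
    (H : Type*) [CommRing H] [HopfAlgebra k H]
    (R : Type*) [CommRing R] [Algebra k R]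
    (ρₖ : R →ₗ[k] R ⊗[k] H)
    (hcoassoc : ∀ r : R,
      (TensorProduct.assoc k R H H)
          ((TensorProduct.map ρₖ (LinearMap.id : H →ₗ[k] H)) (ρₖ r)) =
        (TensorProduct.map (LinearMap.id : R →ₗ[k] R) Coalgebra.comul) (ρₖ r))
    (hcounit : ∀ r : R,
      (TensorProduct.map (LinearMap.id : R →ₗ[k] R) (Coalgebra.counit (R := k) (A := H)))
          (ρₖ r) = r ⊗ₜ[k] (1 : k))
    (g : H →ₐ[k] k) (r : R) :
    ∃ s : R, Algebra.TensorProduct.productMap (AlgHom.id k R)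
      ((Algebra.ofId k R).comp g) (ρₖ s) = r := by
  let l : H →ₗ[k] k := g.toLinearMap ∘ₗ HopfAlgebra.antipode k
  let β : H ⊗[k] H →ₗ[k] k := LinearMap.mul' k k ∘ₗ TensorProduct.map g.toLinearMap l
  have hβ : β ∘ₗ Coalgebra.comul = Coalgebra.counit (R := k) (A := H) := by
    have h1 : β = g.toLinearMap ∘ₗ LinearMap.mul' k H ∘ₗ
        (HopfAlgebra.antipode k (A := H)).lTensor H := by
      ext x y
      simp [β, l]
    ext h
    rw [h1]
    simp only [LinearMap.comp_apply]
    rw [HopfAlgebra.mul_antipode_lTensor_comul_apply]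
    simp
  let P : R ⊗[k] H →ₗ[k] R := (TensorProduct.rid k R).toLinearMap ∘ₗ TensorProduct.map LinearMap.id l
  let Q : R ⊗[k] (H ⊗[k] H) →ₗ[k] R :=
    (TensorProduct.rid k R).toLinearMap ∘ₗ TensorProduct.map LinearMap.id β
  let φ : R ⊗[k] H →ₗ[k] R := (Algebra.TensorProduct.productMap (AlgHom.id k R)
      ((Algebra.ofId k R).comp g)).toLinearMap
  have hQ : ∀ t : R ⊗[k] H, φ (ρₖ (P t)) =
      Q ((TensorProduct.assoc k R H H) ((TensorProduct.map ρₖ (LinearMap.id : H →ₗ[k] H)) t)) := by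
    intro t
    induction t using TensorProduct.induction_on with
    | zero => simp
    | add x y hx hy => simp only [map_add, hx, hy]
    | tmul a h =>
      have hu : ∀ u : R ⊗[k] H, l h • φ u = Q ((TensorProduct.assoc k R H H) (u ⊗ₜ h)) := by
        intro u
        induction u using TensorProduct.induction_on with
        | zero => simp
        | add x y hx hy => rw [map_add, smul_add, hx, hy, TensorProduct.add_tmul, map_add, map_add]
        | tmul a x =>
          simp [φ, Q, β, Algebra.ofId_apply, Algebra.smul_def]
          ring
      rw [TensorProduct.map_tmul, LinearMap.id_apply, ← hu]
      simp [P]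
  refine ⟨P (ρₖ r), ?_⟩
  change φ _ = r
  rw [hQ, hcoassoc]
  have : ∀ t, Q (TensorProduct.map (LinearMap.id : R →ₗ[k] R) Coalgebra.comul t) =
      (TensorProduct.rid k R) (TensorProduct.map (LinearMap.id : R →ₗ[k] R)
        (Coalgebra.counit (R := k) (A := H)) t) := by
    intro t
    rw [← hβ]
    simp only [Q, LinearMap.comp_apply, ← LinearMap.comp_apply (f := TensorProduct.map _ _), 
      ← TensorProduct.map_comp]
    rfl
  rw [this, hcounit]
  simp

/-- **Maximal differential ideals of a differential torsor are conjugate under `G(k)`.**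
Let `k` be an algebraically closed field of characteristic zero, `F` a differential field with
field of constants exactly `k`, and `H` a finitely generated commutative Hopf algebra over `k`
(the coordinate ring of an affine algebraic group `G` over `k`).  Let `R` be a differential
`F`-algebra that is an integral domain and finitely generated as an `F`-algebra, whose
derivation `D` extends that of `F` (`D` is `k`-linear automatically, and is bundled here as a
`k`-linear map), equipped with a differential torsor structure: an `F`-algebra homomorphism
`ρ : R → R ⊗_k H` satisfying the comodule axioms, compatible with the derivation, and such
that `R ⊗_F R → R ⊗_k H, a ⊗ b ↦ (a ⊗ 1)·ρ(b)` is bijective.  For a `k`-algebra homomorphism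
`g : H → k` (a `k`-point of `G`), the corresponding differential `F`-algebra automorphism of
`R` is `(id_R ⊗ g) ∘ ρ`.  Then for any two maximal differential ideals `𝔪` and `𝔪'` of `R`
there exists `g : H →ₐ[k] k` with `𝔪'` equal to the image of `𝔪` under this automorphism. -/
theorem maxDiffIdeals_conjugate_of_differential_torsor
    (k : Type*) [Field k] [IsAlgClosed k] [CharZero k]
    (F : Type*) [Field F] [Algebra k F]
    (δF : F → F) (hδF : IsDerivationFun δF)
    -- the field of constants of `F` is exactly `k`
    (hconst : ∀ x : F, δF x = 0 ↔ x ∈ Set.range (algebraMap k F))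
    (H : Type*) [CommRing H] [HopfAlgebra k H] [Algebra.FiniteType k H]
    (R : Type*) [CommRing R] [IsDomain R] [Algebra F R] [Algebra.FiniteType F R]
    [Algebra k R] [IsScalarTower k F R]
    -- the derivation `D` of `R` extending `δF`
    (D : R →ₗ[k] R)
    (hLeib : ∀ a b : R, D (a * b) = a * D b + D a * b)
    (hext : ∀ a : F, D (algebraMap F R a) = algebraMap F R (δF a))
    -- the coaction `ρ`, an `F`-algebra homomorphism, with its `k`-linear realization `ρₖ`
    (ρ : R →ₐ[F] R ⊗[k] H)
    (ρₖ : R →ₗ[k] R ⊗[k] H) (hρₖ : ∀ r : R, ρₖ r = ρ r)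
    -- comodule axioms
    (hcoassoc : ∀ r : R,
      (TensorProduct.assoc k R H H)
          ((TensorProduct.map ρₖ (LinearMap.id : H →ₗ[k] H)) (ρ r)) =
        (TensorProduct.map (LinearMap.id : R →ₗ[k] R) Coalgebra.comul) (ρ r))
    (hcounit : ∀ r : R,
      (TensorProduct.map (LinearMap.id : R →ₗ[k] R) (Coalgebra.counit (R := k) (A := H)))
          (ρ r) = r ⊗ₜ[k] (1 : k))
    -- compatibility with the derivation (`H` consists of constants)
    (hder : ∀ r : R, ρ (D r) = (TensorProduct.map D (LinearMap.id : H →ₗ[k] H)) (ρ r))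
    -- the torsor condition
    (htorsor : Function.Bijective
      (Algebra.TensorProduct.productMap
        (Algebra.TensorProduct.includeLeft : R →ₐ[F] R ⊗[k] H) ρ)) :
    ∀ 𝔪 𝔪' : Ideal R, IsMaxDiffIdeal (⇑D) 𝔪 → IsMaxDiffIdeal (⇑D) 𝔪' →
      ∃ g : H →ₐ[k] k,
        𝔪' = Ideal.map
          ((Algebra.TensorProduct.productMap (AlgHom.id k R)
              ((Algebra.ofId k R).comp g)).toRingHom.comp ρ.toRingHom) 𝔪 := by
  intro 𝔪 𝔪' hm hm'
  obtain ⟨g, hg⟩ := aux_key k F δF hδF hconst H R D hLeib hext ρ hder htorsor 𝔪' 𝔪 hm' hm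
  refine ⟨g, ?_⟩
  set φ := (Algebra.TensorProduct.productMap (AlgHom.id k R)
              ((Algebra.ofId k R).comp g)).toRingHom.comp ρ.toRingHom with hφ
  have hsurj : Function.Surjective φ := by
    intro r
    obtain ⟨s, hs⟩ := aux_surj k H R ρₖ (fun r => by rw [hρₖ]; exact hcoassoc r)
      (fun r => by rw [hρₖ]; exact hcounit r) g r
    refine ⟨s, ?_⟩
    rw [hρₖ] at hs
    exact hs
  have hcomap : 𝔪 = 𝔪'.comap φ := by
    ext r
    exact hg r
  rw [hcomap, Ideal.map_comap_of_surjective φ hsurj]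
end

section
/- Let k be an algebraically closed field of characteristic zero, B a finitely generated k-algebra that is an integral domain, and Γ a finitely generated subgroup of the additive group (B,+). Then the ad-open set {c ∈ Hom_{k-alg}(B,k) : c is injective on Γ} is Zariski dense in Hom_{k-alg}(B,k); that is, for every nonzero b ∈ B there exists a k-algebra homomorphism c : B → k with c(b) ≠ 0 and with c injective on Γ. -/
open Polynomial in
theorem aux_root (k : Type*) [Field k] [IsAlgClosed k] [CharZero k] (p : ℕ) (hp : 0 < p) :
    ∃ a : k, IsIntegral ℚ a ∧ (minpoly ℚ a).natDegree = p.totient := by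
  have : NeZero (p : k) := ⟨by exact_mod_cast hp.ne'⟩
  obtain ⟨a, ha⟩ := IsAlgClosed.exists_root (cyclotomic p k) (degree_cyclotomic_pos p k hp).ne'
  have h : IsPrimitiveRoot a p := isRoot_cyclotomic_iff.mp ha
  refine ⟨a, (h.isIntegral hp).tower_top, ?_⟩
  rw [← cyclotomic_eq_minpoly_rat h hp, natDegree_cyclotomic]

theorem aux_indep_adjoin {k : Type*} [Field k] [CharZero k] {ι : Type*} (x : ι → k)
    (hx : AlgebraicIndependent ℚ x) (a : k) (ha : IsIntegral ℚ a) :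
    LinearIndependent (Algebra.adjoin ℚ (Set.range x))
      (fun i : Fin (minpoly ℚ a).natDegree => a ^ (i : ℕ)) := by
  classical
  let E := IntermediateField.adjoin ℚ {a}
  have : FiniteDimensional ℚ E := IntermediateField.adjoin.finiteDimensional ha
  have hx' : AlgebraicIndependent E x := hx.extendScalars E
  let α : E := IntermediateField.AdjoinSimple.gen ℚ a
  have hα : (α : k) = a := IntermediateField.AdjoinSimple.coe_gen ℚ a
  have hli : LinearIndependent ℚ (fun i : Fin (minpoly ℚ a).natDegree => α ^ (i : ℕ)) := by
    have := linearIndependent_pow (K := ℚ) a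
    apply LinearIndependent.of_comp (E.val.toLinearMap)
    have h2 : (E.val.toLinearMap ∘ fun i : Fin (minpoly ℚ a).natDegree => α ^ (i : ℕ)) =
        fun i : Fin (minpoly ℚ a).natDegree => a ^ (i : ℕ) := by
      funext i
      simp [hα]
    rw [h2]
    exact this
  rw [Fintype.linearIndependent_iff]
  intro g hg
  have hP : ∀ i, ∃ P : MvPolynomial ι ℚ, MvPolynomial.aeval x P = (g i : k) := by
    intro i
    have h1 : ∀ z ∈ Algebra.adjoin ℚ (Set.range x),
        ∃ P : MvPolynomial ι ℚ, MvPolynomial.aeval x P = z := by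
      intro z hz
      rw [Algebra.adjoin_range_eq_range_aeval] at hz
      exact hz
    exact h1 _ (g i).2
  choose P hP using hP
  have hz : ∑ i : Fin (minpoly ℚ a).natDegree, MvPolynomial.C (α ^ (i : ℕ)) * MvPolynomial.map (algebraMap ℚ E) (P i) = 0 := by
    apply (algebraicIndependent_iff_injective_aeval.mp hx')
    rw [map_zero, map_sum, ← hg]
    refine Finset.sum_congr rfl fun i _ => ?_
    rw [map_mul, MvPolynomial.aeval_C, MvPolynomial.aeval_map_algebraMap, hP, Algebra.smul_def,
      mul_comm]
    rfl
  intro i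
  have : P i = 0 := by
    ext m
    have h1 := congrArg (MvPolynomial.coeff m) hz
    simp only [MvPolynomial.coeff_sum, MvPolynomial.coeff_C_mul, MvPolynomial.coeff_map,
      MvPolynomial.coeff_zero] at h1
    have := Fintype.linearIndependent_iff.mp hli (fun i => (P i).coeff m) (by
      rw [← h1]
      refine Finset.sum_congr rfl fun i _ => ?_
      rw [Algebra.smul_def, mul_comm])
    simpa using this i
  apply Subtype.ext
  rw [← hP, this]; simp

open IntermediateField.algebraAdjoinAdjoin in
theorem aux_large (K k : Type*) [Field K] [Field k] [IsAlgClosed k] [CharZero K] [CharZero k]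
    [Algebra K k]
    [Algebra.EssFiniteType ℚ K] (D : ℕ) :
    ∃ a : k, LinearIndependent K (fun i : Fin D => a ^ (i : ℕ)) := by
  have ⟨s, hs⟩ := IntermediateField.fg_top ℚ K
  have : Algebra.IsAlgebraic (Algebra.adjoin ℚ (s : Set K)) K := by
    rw [← IntermediateField.isAlgebraic_adjoin_iff_top, hs, Algebra.isAlgebraic_iff_isIntegral]
    exact Algebra.isIntegral_of_surjective IntermediateField.topEquiv.surjective
  have ⟨t, hts, ht⟩ := exists_isTranscendenceBasis_subset (R := ℚ) (s : Set K)
  let F := IntermediateField.adjoin ℚ (t : Set K)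
  have : Module.Finite F K := by
    apply +allowSynthFailures Algebra.finite_of_essFiniteType_of_isAlgebraic
    · exact .of_comp ℚ _ _
    · convert! ht.isAlgebraic_field <;> simp
  let d := Module.finrank F K
  obtain ⟨p, hpD, hp⟩ := Nat.exists_infinite_primes (d * D + 2)
  obtain ⟨a, ha, hdeg⟩ := aux_root k p hp.pos
  rw [Nat.totient_prime hp] at hdeg
  refine ⟨a, ?_⟩
  have haK : IsIntegral K a := ha.tower_top
  have hFind : LinearIndependent F (fun i : Fin (minpoly ℚ a).natDegree => a ^ (i : ℕ)) := by
    rw [← LinearIndependent.iff_fractionRing (R := Algebra.adjoin ℚ t)]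
    have hx : AlgebraicIndependent ℚ (fun i : t => algebraMap K k i) :=
      ht.1.map' (f := (Algebra.ofId K k).restrictScalars ℚ) (algebraMap K k).injective
    have h0 := aux_indep_adjoin _ hx a ha
    rw [Fintype.linearIndependent_iff] at h0 ⊢
    intro g hg i
    have hmem : ∀ i, algebraMap K k (g i) ∈
        Algebra.adjoin ℚ (Set.range (fun i : t => algebraMap K k i)) := by
      intro i
      have : Set.range (fun i : t => algebraMap K k i) =
        ((Algebra.ofId K k).restrictScalars ℚ) '' t := by
        ext; simp [Algebra.ofId_apply]
      rw [this, ← AlgHom.map_adjoin]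
      exact ⟨g i, (g i).2, rfl⟩
    have := h0 (fun i => ⟨_, hmem i⟩) (by
      rw [← hg]
      refine Finset.sum_congr rfl fun i _ => ?_
      rw [Algebra.smul_def, Algebra.smul_def]; rfl) i
    have := congrArg Subtype.val this
    apply Subtype.ext
    simpa using this
  have hle : D ≤ (minpoly K a).natDegree := by
    let L := IntermediateField.adjoin K {a}
    have : FiniteDimensional K L := IntermediateField.adjoin.finiteDimensional haK
    have : FiniteDimensional F L := FiniteDimensional.trans F K L
    let α : L := IntermediateField.AdjoinSimple.gen K a
    have hL : LinearIndependent F (fun i : Fin (minpoly ℚ a).natDegree => α ^ (i : ℕ)) := by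
      apply LinearIndependent.of_comp (L.val.toLinearMap.restrictScalars F)
      have h2 : (L.val.toLinearMap.restrictScalars F ∘
          fun i : Fin (minpoly ℚ a).natDegree => α ^ (i : ℕ)) =
          fun i : Fin (minpoly ℚ a).natDegree => a ^ (i : ℕ) := by
        funext i
        simp [α]
      rw [h2]
      exact hFind
    have h1 := hL.fintype_card_le_finrank
    rw [← Module.finrank_mul_finrank F K L, IntermediateField.adjoin.finrank haK] at h1
    simp only [Fintype.card_fin, hdeg] at h1
    by_contra hcon
    have : d * (minpoly K a).natDegree ≤ d * D := Nat.mul_le_mul_left _ (by omega)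
    change p - 1 ≤ d * _ at h1
    omega
  exact (linearIndependent_pow (K := K) a).comp (Fin.castLE hle) (Fin.castLE_injective hle)

open Polynomial in
theorem aux_one (k : Type*) [Field k] [IsAlgClosed k] [CharZero k]
    (Γ : AddSubgroup k[X]) (hΓ : Γ.FG) :
    ∃ a : k, ∀ γ ∈ Γ, aeval a γ = 0 → γ = 0 := by
  classical
  obtain ⟨S, rfl⟩ := hΓ
  let T : Finset k := S.biUnion fun s => s.coeffs
  let K := IntermediateField.adjoin ℚ (T : Set k)
  have : Algebra.EssFiniteType ℚ K :=
    IntermediateField.essFiniteType_iff.mpr (IntermediateField.fg_adjoin_finset T)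
  let D := S.sup natDegree + 1
  obtain ⟨a, ha⟩ := aux_large K k D
  refine ⟨a, fun γ hγ h0 => ?_⟩
  have key : (∀ i, γ.coeff i ∈ K) ∧ ∀ i, D ≤ i → γ.coeff i = 0 := by
    clear h0
    induction hγ using AddSubgroup.closure_induction with
    | mem x hx =>
      refine ⟨fun i => ?_, fun i hi => ?_⟩
      · by_cases h : x.coeff i = 0
        · rw [h]; exact zero_mem _
        · exact IntermediateField.subset_adjoin _ _
            (Finset.mem_coe.mpr (Finset.mem_biUnion.mpr ⟨x, hx, coeff_mem_coeffs h⟩))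
      · apply coeff_eq_zero_of_natDegree_lt
        have : x.natDegree ≤ S.sup natDegree := Finset.le_sup (f := natDegree) hx
        omega
    | zero => simp
    | add x y _ _ hx hy =>
      exact ⟨fun i => by rw [coeff_add]; exact add_mem (hx.1 i) (hy.1 i),
        fun i hi => by rw [coeff_add, hx.2 i hi, hy.2 i hi, add_zero]⟩
    | neg x _ hx =>
      exact ⟨fun i => by rw [coeff_neg]; exact neg_mem (hx.1 i),
        fun i hi => by rw [coeff_neg, hx.2 i hi, neg_zero]⟩
  have hdeg : γ.natDegree < D := by
    by_contra h
    have h1 := key.2 γ.natDegree (by omega)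
    have : γ = 0 := leadingCoeff_eq_zero.mp h1
    simp [this, D] at h
  rw [aeval_eq_sum_range' hdeg, Finset.sum_range] at h0
  have := Fintype.linearIndependent_iff.mp ha (fun i => ⟨γ.coeff i, key.1 i⟩) h0
  ext i
  by_cases hi : i < D
  · simpa using congrArg Subtype.val (this ⟨i, hi⟩)
  · simpa using key.2 i (by omega)

/-- coefficients of elements of a finitely generated group lie in one. -/
theorem aux_coeffs {σ R : Type*} [CommRing R] (Γ : AddSubgroup (MvPolynomial σ R)) (hΓ : Γ.FG) :
    ∃ Δ : AddSubgroup R, Δ.FG ∧ ∀ γ ∈ Γ, ∀ m, γ.coeff m ∈ Δ := by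
  classical
  obtain ⟨S, rfl⟩ := hΓ
  refine ⟨_, ⟨S.biUnion fun s => s.coeffs, rfl⟩, fun γ hγ => ?_⟩
  induction hγ using AddSubgroup.closure_induction with
  | mem x hx =>
    intro m
    by_cases h : x.coeff m = 0
    · rw [h]; exact zero_mem _
    · exact AddSubgroup.subset_closure
        (Finset.mem_coe.mpr (Finset.mem_biUnion.mpr ⟨x, hx, MvPolynomial.coeff_mem_coeffs _ h⟩))
  | zero => intro m; simp
  | add x y _ _ hx hy => intro m; simpa using add_mem (hx m) (hy m)
  | neg x _ hx => intro m; simpa using hx m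

theorem aux_fg_map {G H : Type*} [AddCommGroup G] [AddCommGroup H] (f : G →+ H)
    (Γ : AddSubgroup G) (hΓ : Γ.FG) : (Γ.map f).FG := by
  classical
  obtain ⟨S, rfl⟩ := hΓ
  exact ⟨S.image f, by rw [AddMonoidHom.map_closure, Finset.coe_image]⟩

theorem aux_mv (k : Type*) [Field k] [IsAlgClosed k] [CharZero k] (n : ℕ) :
    ∀ (Γ : AddSubgroup (MvPolynomial (Fin n) k)), Γ.FG →
    ∃ φ : MvPolynomial (Fin n) k →ₐ[k] k, ∀ γ ∈ Γ, φ γ = 0 → γ = 0 := by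
  induction n with
  | zero =>
    intro Γ _
    refine ⟨(MvPolynomial.isEmptyAlgEquiv k (Fin 0)).toAlgHom, fun γ _ h => ?_⟩
    exact (MvPolynomial.isEmptyAlgEquiv k (Fin 0)).injective (by simpa using h)
  | succ n ih =>
    intro Γ hΓ
    let e : MvPolynomial (Fin (n + 1)) k ≃ₐ[k] MvPolynomial (Fin n) (Polynomial k) :=
      (MvPolynomial.renameEquiv k (finSuccEquiv n)).trans (MvPolynomial.optionEquivRight k (Fin n))
    obtain ⟨Δ, hΔ, hc⟩ := aux_coeffs (Γ.map (e : _ →+ MvPolynomial (Fin n) (Polynomial k)))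
      (aux_fg_map _ _ hΓ)
    obtain ⟨a, ha⟩ := aux_one k Δ hΔ
    let ψ : MvPolynomial (Fin n) (Polynomial k) →ₐ[k] MvPolynomial (Fin n) k :=
      MvPolynomial.mapAlgHom (Polynomial.aeval a)
    let θ := ψ.comp e.toAlgHom
    obtain ⟨φ, hφ⟩ := ih (Γ.map (θ : _ →+ MvPolynomial (Fin n) k)) (aux_fg_map _ _ hΓ)
    refine ⟨φ.comp θ, fun γ hγ h => ?_⟩
    have h1 : θ γ = 0 := hφ _ ⟨γ, hγ, rfl⟩ h
    have h2 : e γ = 0 := by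
      ext1 m
      apply ha _ (hc _ ⟨γ, hγ, rfl⟩ m)
      have := congrArg (MvPolynomial.coeff m) h1
      simpa [θ, ψ, MvPolynomial.coeff_map] using this
    exact e.injective (by simpa using h2)

theorem aux_lift (k : Type*) [Field k] [IsAlgClosed k] (A B : Type*) [CommRing A] [CommRing B]
    [Algebra k A] [Algebra k B] [Algebra A B] [IsScalarTower k A B] [Algebra.FiniteType k B]
    [Algebra.IsIntegral A B] (hinj : Function.Injective (algebraMap A B)) (φ : A →ₐ[k] k) :
    ∃ c : B →ₐ[k] k, ∀ x, c (algebraMap A B x) = φ x := by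
  have hmax : (RingHom.ker φ).IsMaximal :=
    RingHom.ker_isMaximal_of_surjective φ fun x => ⟨algebraMap k A x, by simp⟩
  obtain ⟨Q, hQ, hQA⟩ := Ideal.exists_ideal_over_maximal_of_isIntegral (S := B) (RingHom.ker φ)
    (by rw [(RingHom.injective_iff_ker_eq_bot _).mp hinj]; exact bot_le)
  let _ : Field (B ⧸ Q) := Ideal.Quotient.field Q
  have : Module.Finite k (B ⧸ Q) := finite_of_finite_type_of_isJacobsonRing k (B ⧸ Q)
  have hb : Function.Bijective (algebraMap k (B ⧸ Q)) :=
    IsAlgClosed.algebraMap_bijective_of_isIntegral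
  let e : k ≃ₐ[k] (B ⧸ Q) := AlgEquiv.ofBijective (Algebra.ofId k (B ⧸ Q)) hb
  let c : B →ₐ[k] k := e.symm.toAlgHom.comp (Ideal.Quotient.mkₐ k Q)
  refine ⟨c, fun x => ?_⟩
  have h1 : x - algebraMap k A (φ x) ∈ RingHom.ker φ := by simp [RingHom.mem_ker]
  rw [← hQA, Ideal.mem_comap] at h1
  have h2 : c (algebraMap A B (x - algebraMap k A (φ x))) = 0 := by
    have : Ideal.Quotient.mk Q (algebraMap A B (x - algebraMap k A (φ x))) = 0 :=
      Ideal.Quotient.eq_zero_iff_mem.mpr h1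
    simp only [c, AlgHom.comp_apply, Ideal.Quotient.mkₐ_eq_mk, this, map_zero]
  rw [map_sub, map_sub, ← IsScalarTower.algebraMap_apply, AlgHom.commutes] at h2
  simpa using sub_eq_zero.mp h2

open Polynomial in
theorem aux_lowest {k A B : Type*} [CommRing k] [CommRing A] [CommRing B] [IsDomain B] [Algebra A B]
    (c : B →+* k) (Γ' : AddSubgroup A) (hc : ∀ x ∈ Γ', c (algebraMap A B x) = 0 → x = 0)
    (γ : B) (hγ : γ ≠ 0) (n : ℕ) : ∀ p : A[X], p.natDegree ≤ n → p ≠ 0 → (∀ i, p.coeff i ∈ Γ') →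
    aeval γ p = 0 → c γ ≠ 0 := by
  induction n with
  | zero =>
    intro p hp hp0 hcoef h hcg
    rw [eq_C_of_natDegree_le_zero hp, aeval_C] at h
    have := hc _ (hcoef 0) (by rw [h, map_zero])
    rw [eq_C_of_natDegree_le_zero hp, this, map_zero] at hp0
    exact hp0 rfl
  | succ n ih =>
    intro p hp hp0 hcoef h hcg
    have hd : aeval γ p = aeval γ p.divX * γ + algebraMap A B (p.coeff 0) := by
      conv_lhs => rw [← divX_mul_X_add p]
      simp
    have h0 : p.coeff 0 = 0 := by
      apply hc _ (hcoef 0)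
      have := congrArg c (hd.symm.trans h)
      simpa [hcg] using this
    rw [h, h0, map_zero, add_zero] at hd
    refine ih p.divX ?_ ?_ (fun i => by rw [coeff_divX]; exact hcoef _) ?_ hcg
    · rw [natDegree_divX_eq_natDegree_tsub_one]; omega
    · intro h1
      apply hp0
      rw [← divX_mul_X_add p, h1, h0]; simp
    · exact (mul_eq_zero.mp hd.symm).resolve_right hγ

theorem aux_eval_mem {σ A : Type*} [CommRing A] (Δ : AddSubgroup A) (P : MvPolynomial σ A)
    (hP : ∀ m, P.coeff m ∈ Δ) (z : σ → ℤ) :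
    MvPolynomial.eval (fun i => (z i : A)) P ∈ Δ := by
  rw [MvPolynomial.eval_eq]
  refine sum_mem fun m _ => ?_
  have : P.coeff m * ∏ i ∈ m.support, (z i : A) ^ m i =
      (∏ i ∈ m.support, z i ^ m i : ℤ) • P.coeff m := by
    rw [zsmul_eq_mul, mul_comm]; push_cast; rfl
  rw [this]
  exact zsmul_mem (hP m) _

theorem aux_polycoeffs {σ A : Type*} [CommRing A] (p : Polynomial (MvPolynomial σ A)) :
    ∃ Δ : AddSubgroup A, Δ.FG ∧ ∀ i m, (p.coeff i).coeff m ∈ Δ := by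
  classical
  obtain ⟨Δ, h1, h2⟩ := aux_coeffs (AddSubgroup.closure (p.coeffs : Set (MvPolynomial σ A)))
    ⟨_, rfl⟩
  refine ⟨Δ, h1, fun i => h2 _ ?_⟩
  by_cases h : p.coeff i = 0
  · rw [h]; exact zero_mem _
  · exact AddSubgroup.subset_closure (Polynomial.coeff_mem_coeffs h)

open Polynomial in
attribute [local instance] MvPolynomial.algebraMvPolynomial in
theorem aux_family {A B : Type*} [CommRing A] [CommRing B] [Nontrivial A] [Algebra A B]
    [Algebra.IsIntegral A B] (Γ : AddSubgroup B) (hΓ : Γ.FG) :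
    ∃ Δ : AddSubgroup A, Δ.FG ∧ ∀ γ ∈ Γ, ∃ p : A[X], p ≠ 0 ∧ (∀ i, p.coeff i ∈ Δ) ∧
      aeval γ p = 0 := by
  classical
  obtain ⟨S, rfl⟩ := hΓ
  let u : MvPolynomial S B := ∑ i : S, MvPolynomial.C (i : B) * MvPolynomial.X i
  have hu : IsIntegral (MvPolynomial S A) u :=
    MvPolynomial.isIntegral_iff_isIntegral_coeff.mpr fun m => Algebra.IsIntegral.isIntegral _
  obtain ⟨p, hp, hpu⟩ := hu
  obtain ⟨Δ, hΔ, hΔp⟩ := aux_polycoeffs p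
  refine ⟨Δ, hΔ, fun γ hγ => ?_⟩
  obtain ⟨z, rfl⟩ : ∃ z : S → ℤ, γ = ∑ i : S, z i • (i : B) := by
    induction hγ using AddSubgroup.closure_induction with
    | mem x hx => exact ⟨Pi.single ⟨x, hx⟩ 1, by simp [Pi.single_apply, ite_smul]⟩
    | zero => exact ⟨0, by simp⟩
    | add x y _ _ hx hy =>
      obtain ⟨z, rfl⟩ := hx
      obtain ⟨w, rfl⟩ := hy
      exact ⟨z + w, by simp [add_smul, Finset.sum_add_distrib]⟩
    | neg x _ hx =>
      obtain ⟨z, rfl⟩ := hx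
      exact ⟨-z, by simp⟩
  let eA : MvPolynomial S A →+* A := MvPolynomial.eval fun i => (z i : A)
  let eB : MvPolynomial S B →+* B := MvPolynomial.eval fun i => (z i : B)
  have hcomm : eB.comp (algebraMap (MvPolynomial S A) (MvPolynomial S B)) =
      (algebraMap A B).comp eA := by
    have hmap : algebraMap (MvPolynomial S A) (MvPolynomial S B) =
        MvPolynomial.map (algebraMap A B) := rfl
    rw [hmap]
    ext i <;> simp [eA, eB]
  refine ⟨p.map eA, (hp.map eA).ne_zero, fun i => ?_, ?_⟩
  · rw [coeff_map]
    exact aux_eval_mem Δ _ (hΔp i) z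
  · have h1 : eB u = ∑ i : S, z i • (i : B) := by
      simp [eB, u, mul_comm]
    have h2 := congrArg eB hpu
    rw [hom_eval₂, hcomm, h1, map_zero] at h2
    rw [aeval_def, eval₂_map]
    exact h2

/-- **Density of ad-open sets.**
Let `k` be an algebraically closed field of characteristic zero, `B` a finitely generated
`k`-algebra that is an integral domain, and `Γ` a finitely generated subgroup of the additive
group `(B,+)`.  Then the ad-open set `{c ∈ Hom_{k-alg}(B,k) : c is injective on Γ}` is Zariski
dense in `Hom_{k-alg}(B,k)`; that is, for every nonzero `b ∈ B` there exists a `k`-algebra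
homomorphism `c : B → k` with `c b ≠ 0` and with `c` injective on `Γ`. -/
theorem adOpen_zariski_dense
    (k : Type*) [Field k] [IsAlgClosed k] [CharZero k]
    (B : Type*) [CommRing B] [IsDomain B] [Algebra k B] [Algebra.FiniteType k B]
    (Γ : AddSubgroup B) (hΓ : Γ.FG)
    (b : B) (hb : b ≠ 0) :
    ∃ c : B →ₐ[k] k, c b ≠ 0 ∧ Set.InjOn c (Γ : Set B) := by
  obtain ⟨n, g, hinj, hint⟩ := exists_integral_inj_algHom_of_fg k B
  let _ : Algebra (MvPolynomial (Fin n) k) B := g.toRingHom.toAlgebra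
  have : IsScalarTower k (MvPolynomial (Fin n) k) B :=
    IsScalarTower.of_algebraMap_eq fun x => (g.commutes x).symm
  have : Algebra.IsIntegral (MvPolynomial (Fin n) k) B := ⟨hint⟩
  obtain ⟨Δ, hΔ, hΔp⟩ := aux_family (A := MvPolynomial (Fin n) k) (Γ ⊔ AddSubgroup.zmultiples b)
    (hΓ.sup ⟨{b}, by simp [AddSubgroup.zmultiples_eq_closure]⟩)
  obtain ⟨φ, hφ⟩ := aux_mv k n Δ hΔ
  obtain ⟨c, hc⟩ := aux_lift k (MvPolynomial (Fin n) k) B hinj φ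
  have key : ∀ γ ∈ Γ ⊔ AddSubgroup.zmultiples b, γ ≠ 0 → c γ ≠ 0 := by
    intro γ hγ h0
    obtain ⟨p, hp0, hp, hpz⟩ := hΔp γ hγ
    exact aux_lowest (c : B →+* k) Δ (fun x hx h => hφ x hx (by rw [← hc]; exact h)) γ h0 _ p
      le_rfl hp0 hp hpz
  refine ⟨c, key b (AddSubgroup.mem_sup_right (AddSubgroup.mem_zmultiples b)) hb, ?_⟩
  intro x hx y hy hxy
  by_contra hne
  exact key (x - y) (AddSubgroup.mem_sup_left (sub_mem hx hy)) (sub_ne_zero.mpr hne)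
    (by rw [map_sub, hxy, sub_self])
end
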